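/- Let n₁, n₂ ≥ 1 be integers and μ ∈ ℝ. Let u be a positive C² function on ℝ^{n₁}×(0,∞)×ℝ^{n₂}×(0,∞) satisfying −(Δ₁ + Δ₂)u = μu, and assume u is minimal, i.e. every C² solution v of −(Δ₁ + Δ₂)v = μv with 0 ≤ v ≤ u is of the form v = C·u for some constant C ∈ [0,1]. Then there exist μ₁, μ₂ ∈ ℝ with μ₁ + μ₂ = μ, μ₁ ≤ n₁²/4 and μ₂ ≤ n₂²/4, and positive minimal C² solutions u₁ of −Δ₁u₁ = μ₁u₁ on ℝ^{n₁}×(0,∞) and u₂ of −Δ₂u₂ = μ₂u₂ on ℝ^{n₂}×(0,∞), such that u(x₁,y₁,x₂,y₂) = u₁(x₁,y₁)·u₂(x₂,y₂). -/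

import Mathlib

open Real Topology

noncomputable def lapX {n : ℕ} (u : EuclideanSpace ℝ (Fin n) → ℝ → ℝ)
    (x : EuclideanSpace ℝ (Fin n)) (y : ℝ) : ℝ :=
  ∑ i : Fin n, iteratedDeriv 2 (fun t : ℝ => u (x + t • EuclideanSpace.single i (1:ℝ)) y) 0

noncomputable def hypLap (n : ℕ) (u : EuclideanSpace ℝ (Fin n) → ℝ → ℝ)
    (x : EuclideanSpace ℝ (Fin n)) (y : ℝ) : ℝ :=
  y ^ 2 * (lapX u x y + iteratedDeriv 2 (u x) y) - ((n : ℝ) - 1) * y * deriv (u x) y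

noncomputable def hypLap1 (n₁ n₂ : ℕ)
    (u : EuclideanSpace ℝ (Fin n₁) → ℝ → EuclideanSpace ℝ (Fin n₂) → ℝ → ℝ)
    (x₁ : EuclideanSpace ℝ (Fin n₁)) (y₁ : ℝ)
    (x₂ : EuclideanSpace ℝ (Fin n₂)) (y₂ : ℝ) : ℝ :=
  hypLap n₁ (fun x y => u x y x₂ y₂) x₁ y₁

noncomputable def hypLap2 (n₁ n₂ : ℕ)
    (u : EuclideanSpace ℝ (Fin n₁) → ℝ → EuclideanSpace ℝ (Fin n₂) → ℝ → ℝ)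
    (x₁ : EuclideanSpace ℝ (Fin n₁)) (y₁ : ℝ)
    (x₂ : EuclideanSpace ℝ (Fin n₂)) (y₂ : ℝ) : ℝ :=
  hypLap n₂ (u x₁ y₁) x₂ y₂

/-- `w` is a positive minimal C² `μ`-harmonic function on the half-space model `ℍ^{n+1}`:
it is positive, C², solves `-Δ w = μ w`, and every C² solution `v` of the same equation
with `0 ≤ v ≤ w` is a constant multiple `C·w`, `C ∈ [0,1]`. -/
def MinimalHarmonic (n : ℕ) (μ : ℝ) (w : EuclideanSpace ℝ (Fin n) → ℝ → ℝ) : Prop :=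
  (∀ x, ∀ y : ℝ, 0 < y → 0 < w x y) ∧
  ContDiffOn ℝ 2 (fun p : EuclideanSpace ℝ (Fin n) × ℝ => w p.1 p.2)
    {p : EuclideanSpace ℝ (Fin n) × ℝ | 0 < p.2} ∧
  (∀ x, ∀ y : ℝ, 0 < y → -(hypLap n w x y) = μ * w x y) ∧
  ∀ v : EuclideanSpace ℝ (Fin n) → ℝ → ℝ,
    ContDiffOn ℝ 2 (fun p : EuclideanSpace ℝ (Fin n) × ℝ => v p.1 p.2)
      {p : EuclideanSpace ℝ (Fin n) × ℝ | 0 < p.2} →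
    (∀ x, ∀ y : ℝ, 0 < y → -(hypLap n v x y) = μ * v x y) →
    (∀ x, ∀ y : ℝ, 0 < y → 0 ≤ v x y ∧ v x y ≤ w x y) →
    ∃ C : ℝ, C ∈ Set.Icc (0:ℝ) 1 ∧ ∀ x, ∀ y : ℝ, 0 < y → v x y = C * w x y

/-!
In logarithmic coordinates `s = log y` each factor carries the convolution operators whose kernel
depends only on the hyperbolic distance; they commute with `Δ₁` and `Δ₂`. A weak Harnack inequality
bounds the average of a positive solution `u` over both factors by a multiple of `u`, so for minimal
`u` this average is a multiple of `u`. Letting the support of the average in one factor shrink, `u`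
is an eigenfunction of the averages in the other factor, hence of `Δ₁` and of `Δ₂` separately.

To see that two slices `u (·, q₀)` and `u (·, q₁)` are proportional, consider the functions
`0 ≤ v ≤ u` with `v (·, q₀) + v (·, q₁) = u (·, q₀)` on the fixed set of suitable commuting
averages. They form a nonempty convex set on which Markov-Kakutani averaging finds an eigenfunction
of both families of averages, thus a solution below `u`; by minimality it is a multiple of `u`.
The bound `μᵢ ≤ nᵢ² / 4` follows by comparing `uᵢ` with an explicit compactly supported subsolution.
-/

open MeasureTheory Set Filter

/-! ### Directional derivatives -/

section LineDeriv

variable {E F : Type*} [NormedAddCommGroup E] [NormedSpace ℝ E] [NormedAddCommGroup F]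
  [NormedSpace ℝ F]

/-- The second derivative of `f` at `p` along the line in direction `v`. -/
noncomputable def lineDeriv₂ (f : E → ℝ) (p v : E) : ℝ :=
  lineDeriv ℝ (fun q => lineDeriv ℝ f q v) p v

theorem hasLineDerivAt_comp {k : ℝ → ℝ} {k' : ℝ} {f : E → ℝ} {f' : ℝ} {p v : E}
    (hk : HasDerivAt k k' (f p)) (hf : HasLineDerivAt ℝ f f' p v) :
    HasLineDerivAt ℝ (fun q => k (f q)) (k' * f') p v :=
  HasDerivAt.comp (h₂ := k) (h := fun t : ℝ => f (p + t • v)) 0 (by simpa using hk) hf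

theorem hasLineDerivAt_mul {f g : E → ℝ} {f' g' : ℝ} {p v : E}
    (hf : HasLineDerivAt ℝ f f' p v) (hg : HasLineDerivAt ℝ g g' p v) :
    HasLineDerivAt ℝ (fun q => f q * g q) (f' * g p + f p * g') p v := by
  simpa [HasLineDerivAt] using HasDerivAt.fun_mul (x := (0 : ℝ)) hf hg

theorem lineDeriv_const_mul (c : ℝ) (f : E → ℝ) (p v : E) :
    lineDeriv ℝ (fun q => c * f q) p v = c * lineDeriv ℝ f p v := by
  simp [lineDeriv]

theorem lineDeriv₂_const_mul (c : ℝ) (f : E → ℝ) (p v : E) :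
    lineDeriv₂ (fun q => c * f q) p v = c * lineDeriv₂ f p v := by
  simp only [lineDeriv₂, lineDeriv_const_mul]

theorem lineDeriv₂_eq_iteratedDeriv (f : E → ℝ) (p v : E) :
    lineDeriv₂ f p v = iteratedDeriv 2 (fun t : ℝ => f (p + t • v)) 0 := by
  have along_line : ∀ t : ℝ, lineDeriv ℝ f (p + t • v) v = deriv (fun t => f (p + t • v)) t := by
    intro t
    have := deriv_comp_const_add (fun t : ℝ => f (p + t • v)) t 0
    simpa only [lineDeriv, add_zero, add_smul, ← add_assoc] using this
  rw [iteratedDeriv_succ, iteratedDeriv_one, lineDeriv₂, lineDeriv]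
  exact congrArg (fun g => deriv g 0) (funext along_line)

theorem lineDeriv₂_comp {k : ℝ → ℝ} (hk : ContDiff ℝ 2 k) {f a : E → ℝ} {b : ℝ} {p v : E}
    (hf : ∀ q, HasLineDerivAt ℝ f (a q) q v) (ha : HasLineDerivAt ℝ a b p v) :
    lineDeriv₂ (fun q => k (f q)) p v =
      deriv (deriv k) (f p) * a p ^ 2 + deriv k (f p) * b := by
  have hk' : ContDiff ℝ 1 (deriv k) := hk.deriv' (n := 1)
  have first : (fun q => lineDeriv ℝ (fun q => k (f q)) q v) = fun q => deriv k (f q) * a q :=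
    funext fun q => (hasLineDerivAt_comp
      (hk.differentiable two_ne_zero (f q)).hasDerivAt (hf q)).lineDeriv
  have second := hasLineDerivAt_mul (hasLineDerivAt_comp
    (hk'.differentiable one_ne_zero (f p)).hasDerivAt (hf p)) ha
  rw [lineDeriv₂, first, second.lineDeriv]
  ring

variable {m m' : WithTop ℕ∞}

theorem contDiff_lineDeriv {f : E → ℝ} (hf : ContDiff ℝ m f) (hm : m' + 1 ≤ m) (v : E) :
    ContDiff ℝ m' (fun p => lineDeriv ℝ f p v) := by
  have hd := hf.differentiable (by rintro rfl; simp at hm)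
  simp only [(hd _).lineDeriv_eq_fderiv]
  exact (hf.fderiv_right hm).clm_apply contDiff_const

theorem hasLineDerivAt_of_contDiff {f : E → ℝ} (hf : ContDiff ℝ m f) (hm : m ≠ 0) (p v : E) :
    HasLineDerivAt ℝ f (lineDeriv ℝ f p v) p v :=
  (hf.differentiable hm p).lineDifferentiableAt.hasLineDerivAt

theorem continuous_lineDeriv {f : E → ℝ} (hf : ContDiff ℝ 1 f) (v : E) :
    Continuous (fun p => lineDeriv ℝ f p v) :=
  (contDiff_lineDeriv (m' := 0) hf (by norm_num) v).continuous

theorem continuous_lineDeriv₂ {f : E → ℝ} (hf : ContDiff ℝ 2 f) (v : E) :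
    Continuous (fun p => lineDeriv₂ f p v) :=
  continuous_lineDeriv (contDiff_lineDeriv hf (by norm_num [one_add_one_eq_two]) v) v

theorem hasCompactSupport_lineDeriv {f : E → ℝ} (hf : HasCompactSupport f) (v : E) :
    HasCompactSupport (fun p => lineDeriv ℝ f p v) := by
  refine HasCompactSupport.intro hf fun p hp => ?_
  have hz : f =ᶠ[𝓝 p] 0 := notMem_tsupport_iff_eventuallyEq.1 hp
  simpa [lineDeriv] using hz.lineDeriv_eq (v := v) (𝕜 := ℝ)

theorem lineDeriv_prodMk_left (κ : E × F → ℝ) (z v : E) (q : F) :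
    lineDeriv ℝ (fun z => κ (z, q)) z v = lineDeriv ℝ κ (z, q) (v, 0) := by
  simp [lineDeriv]

end LineDeriv

/-! ### Integrals against locally compactly supported kernels -/

section Kernel

/-- The kernel `κ` is locally compactly supported: for `z` in a compact set, `κ (z, ·)` is supported
in a fixed compact set. -/
def LocallyCompactlySupported {E F : Type*} [TopologicalSpace E] [TopologicalSpace F]
    (κ : E × F → ℝ) : Prop :=
  ∀ S : Set E, IsCompact S → ∃ T : Set F, IsCompact T ∧ ∀ z ∈ S, ∀ q ∉ T, κ (z, q) = 0

variable {E F : Type*} [NormedAddCommGroup E] [NormedSpace ℝ E] [ProperSpace E]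
  [NormedAddCommGroup F] [NormedSpace ℝ F] {κ : E × F → ℝ}

theorem LocallyCompactlySupported.lineDeriv (hs : LocallyCompactlySupported κ) (v : E) :
    LocallyCompactlySupported (fun q => lineDeriv ℝ κ q (v, 0)) := by
  intro S hS
  obtain ⟨T, hT, hT0⟩ := hs (Metric.cthickening 1 S) hS.cthickening
  refine ⟨T, hT, fun z hz q hq => ?_⟩
  have hzero : (fun z => κ (z, q)) =ᶠ[𝓝 z] 0 := by
    filter_upwards [Metric.ball_mem_nhds z one_pos] with z' hz'
    exact hT0 z' (Metric.mem_cthickening_of_dist_le _ z 1 S hz (le_of_lt hz')) q hq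
  simpa [_root_.lineDeriv, lineDeriv_prodMk_left] using hzero.lineDeriv_eq (v := v) (𝕜 := ℝ)

variable [MeasurableSpace F] [BorelSpace F] {μ : Measure F} {w : F → ℝ}

theorem contDiff_integral_kernel {m : ℕ∞} (hκ : ContDiff ℝ m κ)
    (hs : LocallyCompactlySupported κ) (hw : LocallyIntegrable w μ) :
    ContDiff ℝ m (fun z => ∫ q, κ (z, q) * w q ∂μ) := by
  refine contDiff_iff_contDiffAt.2 fun z₀ => ?_
  obtain ⟨T, hT, hT0⟩ := hs (Metric.closedBall z₀ 1) (isCompact_closedBall z₀ 1)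
  have hconv := contDiffOn_convolution_right_with_param_comp (ContinuousLinearMap.mul ℝ ℝ)
    (s := Metric.ball z₀ 1) (v := fun _ : E => (0 : F)) contDiffOn_const (f := w)
    (g := fun z x => κ (z, -x)) Metric.isOpen_ball hT.neg
    (fun z x hz hx => hT0 z (Metric.ball_subset_closedBall hz) _ (by simpa using hx)) hw
    (ContDiff.contDiffOn (hκ.comp (g := κ) (f := fun z : E × F => (z.1, -z.2)) (by fun_prop)))
  have := hconv.contDiffAt (Metric.isOpen_ball.mem_nhds (Metric.mem_ball_self one_pos))
  simpa [convolution, mul_comm] using this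

theorem hasLineDerivAt_integral_kernel (hκ : ContDiff ℝ 1 κ)
    (hs : LocallyCompactlySupported κ) (hw : LocallyIntegrable w μ) (z v : E) :
    HasLineDerivAt ℝ (fun z => ∫ q, κ (z, q) * w q ∂μ)
      (∫ q, lineDeriv ℝ κ (z, q) (v, 0) * w q ∂μ) z v := by
  obtain ⟨T, hT, hT0⟩ := hs (Metric.closedBall z 1) (isCompact_closedBall z 1)
  have hg : ContDiff ℝ 1 (fun p : E × F => κ (p.1, -p.2)) := hκ.comp (by fun_prop)
  have hg0 : ∀ y x, y ∈ Metric.ball z 1 → x ∉ -T → κ (y, -x) = 0 := fun y x hy hx =>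
    hT0 y (Metric.ball_subset_closedBall hy) _ (by simpa using hx)
  have hconv := (hasFDerivAt_convolution_right_with_param (ContinuousLinearMap.mul ℝ ℝ)
    (g := fun y x => κ (y, -x)) Metric.isOpen_ball hT.neg hg0 hw hg.contDiffOn (z, 0)
    (Metric.mem_ball_self one_pos)).hasLineDerivAt (v, 0)
  have hfderiv : ∀ x, fderiv ℝ (fun p : E × F => κ (p.1, -p.2)) (z, x) (v, 0) =
      lineDeriv ℝ κ (z, -x) (v, 0) := fun x => by
    rw [← (hg.differentiable one_ne_zero _).lineDeriv_eq_fderiv, ← lineDeriv_prodMk_left,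
      ← lineDeriv_prodMk_left]
  have hsupp : HasCompactSupport fun x => fderiv ℝ (fun p : E × F => κ (p.1, -p.2)) (z, x) := by
    refine HasCompactSupport.intro hT.neg fun x hx => ?_
    refine (hasFDerivAt_zero_of_eventually_const 0 ?_).fderiv
    filter_upwards [(Metric.isOpen_ball.prod hT.neg.isClosed.isOpen_compl).mem_nhds
      (⟨Metric.mem_ball_self one_pos, hx⟩ : (z, x) ∈ Metric.ball z 1 ×ˢ (-T)ᶜ)] with p hp
    exact hg0 p.1 p.2 hp.1 hp.2
  have happly := convolution_precompR_apply (ContinuousLinearMap.mul ℝ ℝ) hw hsupp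
    ((hg.continuous_fderiv one_ne_zero).comp (by fun_prop)) 0 (v, 0)
  have happly' := hconv.congr_deriv happly
  simpa [HasLineDerivAt, convolution, hfderiv, mul_comm] using happly'

end Kernel

/-! ### The hyperbolic Laplacian in logarithmic coordinates -/

/-- The half-space model of dimension `n + 1` in the coordinates `(x, s)`, where `y = exp s`. -/
abbrev LogHalfSpace (n : ℕ) := EuclideanSpace ℝ (Fin n) × ℝ

section Laplacian

variable {n : ℕ}

/-- The coordinate direction of `x i` in `LogHalfSpace n`. -/
noncomputable def dirX (i : Fin n) : LogHalfSpace n := (EuclideanSpace.single i 1, 0)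

/-- The coordinate direction of `s = log y` in `LogHalfSpace n`. -/
def dirS : LogHalfSpace n := (0, 1)

/-- The hyperbolic Laplacian in the coordinates `(x, s)`, `y = exp s`: as `y ∂_y = ∂_s` and
`y² ∂_y² = ∂_s² - ∂_s`, it reads `exp (2 s) Δ_x + ∂_s² - n ∂_s`. -/
noncomputable def logLap (n : ℕ) (f : LogHalfSpace n → ℝ) (p : LogHalfSpace n) : ℝ :=
  exp (2 * p.2) * ∑ i, lineDeriv₂ f p (dirX i) + lineDeriv₂ f p dirS - n * lineDeriv ℝ f p dirS

theorem continuous_logLap {f : LogHalfSpace n → ℝ} (hf : ContDiff ℝ 2 f) :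
    Continuous (logLap n f) := by
  have hX := fun i : Fin n => continuous_lineDeriv₂ hf (dirX i)
  have hS := continuous_lineDeriv₂ hf dirS
  have hS' := continuous_lineDeriv (hf.of_le one_le_two) dirS
  unfold logLap
  fun_prop

theorem logLap_const_mul (c : ℝ) (f : LogHalfSpace n → ℝ) (p : LogHalfSpace n) :
    logLap n (fun q => c * f q) p = c * logLap n f p := by
  simp only [logLap, lineDeriv_const_mul, lineDeriv₂_const_mul, ← Finset.mul_sum]
  ring

/-- `cosh d - 1`, where `d` is the hyperbolic distance of the two points. -/
noncomputable def coshGap (p q : LogHalfSpace n) : ℝ :=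
  ‖p.1 - q.1‖ ^ 2 * exp (-(p.2 + q.2)) / 2 + (cosh (p.2 - q.2) - 1)

theorem coshGap_nonneg (p q : LogHalfSpace n) : 0 ≤ coshGap p q :=
  add_nonneg (by positivity) (sub_nonneg.2 (one_le_cosh _))

theorem coshGap_comm (p q : LogHalfSpace n) : coshGap p q = coshGap q p := by
  rw [coshGap, coshGap, norm_sub_rev, add_comm p.2, ← cosh_neg, neg_sub]

@[simp] theorem coshGap_self (p : LogHalfSpace n) : coshGap p p = 0 := by
  simp [coshGap]

@[fun_prop]
theorem contDiff_coshGap {E : Type*} [NormedAddCommGroup E] [NormedSpace ℝ E] {m : WithTop ℕ∞}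
    {f g : E → LogHalfSpace n} (hf : ContDiff ℝ m f) (hg : ContDiff ℝ m g) :
    ContDiff ℝ m (fun x => coshGap (f x) (g x)) := by
  have : ContDiff ℝ m (fun x => ‖(f x).1 - (g x).1‖ ^ 2) := ContDiff.norm_sq ℝ (by fun_prop)
  unfold coshGap
  fun_prop

@[fun_prop]
theorem continuous_coshGap {X : Type*} [TopologicalSpace X] {f g : X → LogHalfSpace n}
    (hf : Continuous f) (hg : Continuous g) : Continuous (fun x => coshGap (f x) (g x)) := by
  unfold coshGap
  fun_prop

theorem hasLineDerivAt_coshGap_dirX (p q : LogHalfSpace n) (i : Fin n) :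
    HasLineDerivAt ℝ (coshGap · q) ((p.1 i - q.1 i) * exp (-(p.2 + q.2))) p (dirX i) := by
  have hnorm : ∀ t : ℝ, ‖p.1 + t • EuclideanSpace.single i (1 : ℝ) - q.1‖ ^ 2 =
      ‖p.1 - q.1‖ ^ 2 + 2 * (t * (p.1 i - q.1 i)) + t ^ 2 := fun t => by
    rw [add_sub_right_comm, norm_add_sq_real, inner_smul_right, EuclideanSpace.inner_single_right]
    simp [norm_smul]
  have hder : HasDerivAt (fun t : ℝ => (‖p.1 - q.1‖ ^ 2 + 2 * (t * (p.1 i - q.1 i)) + t ^ 2) *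
      exp (-(p.2 + q.2)) / 2 + (cosh (p.2 - q.2) - 1)) _ 0 :=
    (((((((hasDerivAt_id 0).mul_const (p.1 i - q.1 i)).const_mul 2).const_add _).fun_add
      ((hasDerivAt_id (0 : ℝ)).fun_pow 2)).mul_const _).div_const 2).add_const _
  refine (hder.congr_deriv ?_).congr_of_eventuallyEq (.of_forall fun t => ?_)
  · simp
    ring
  · simp [coshGap, dirX, hnorm]

theorem hasLineDerivAt_coshGap_dirS (p q : LogHalfSpace n) :
    HasLineDerivAt ℝ (coshGap · q)
      (sinh (p.2 - q.2) - ‖p.1 - q.1‖ ^ 2 * exp (-(p.2 + q.2)) / 2) p dirS := by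
  have hder : HasDerivAt (fun t : ℝ => ‖p.1 - q.1‖ ^ 2 * exp (-(p.2 + t + q.2)) / 2 +
      (cosh (p.2 + t - q.2) - 1)) _ 0 :=
    ((((((hasDerivAt_id 0).const_add p.2).add_const q.2).fun_neg.exp.const_mul _).div_const
      2).fun_add ((((hasDerivAt_id 0).const_add p.2).sub_const q.2).cosh.sub_const 1))
  refine (hder.congr_deriv ?_).congr_of_eventuallyEq (.of_forall fun t => ?_)
  · simp
    ring
  · simp [coshGap, dirS]

theorem hasLineDerivAt_lineDeriv_coshGap_dirX (p q : LogHalfSpace n) (i : Fin n) :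
    HasLineDerivAt ℝ (fun p => (p.1 i - q.1 i) * exp (-(p.2 + q.2))) (exp (-(p.2 + q.2))) p
      (dirX i) := by
  have hder : HasDerivAt (fun t : ℝ => (p.1 i + t - q.1 i) * exp (-(p.2 + q.2))) _ 0 :=
    (((hasDerivAt_id 0).const_add (p.1 i)).sub_const (q.1 i)).mul_const _
  refine (hder.congr_deriv (one_mul _)).congr_of_eventuallyEq (.of_forall fun t => ?_)
  simp [dirX]

theorem hasLineDerivAt_lineDeriv_coshGap_dirS (p q : LogHalfSpace n) :
    HasLineDerivAt ℝ (fun p => sinh (p.2 - q.2) - ‖p.1 - q.1‖ ^ 2 * exp (-(p.2 + q.2)) / 2)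
      (1 + coshGap p q) p dirS := by
  have hder : HasDerivAt (fun t : ℝ => sinh (p.2 + t - q.2) -
      ‖p.1 - q.1‖ ^ 2 * exp (-(p.2 + t + q.2)) / 2) _ 0 :=
    (((hasDerivAt_id 0).const_add p.2).sub_const q.2).sinh.fun_sub
      ((((hasDerivAt_id 0).const_add p.2).add_const q.2).fun_neg.exp.const_mul _ |>.div_const 2)
  refine (hder.congr_deriv ?_).congr_of_eventuallyEq (.of_forall fun t => ?_)
  · simp [coshGap]
    ring
  · simp [dirS]

/-- The Laplacian of `LogHalfSpace n` on functions of `t = coshGap p q`. -/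
noncomputable def radialLap (n : ℕ) (k : ℝ → ℝ) (t : ℝ) : ℝ :=
  (t ^ 2 + 2 * t) * deriv (deriv k) t + (n + 1) * (1 + t) * deriv k t

theorem logLap_comp_coshGap {k : ℝ → ℝ} (hk : ContDiff ℝ 2 k) (p q : LogHalfSpace n) :
    logLap n (fun p => k (coshGap p q)) p = radialLap n k (coshGap p q) := by
  have hX : ∀ i, lineDeriv₂ (fun p => k (coshGap p q)) p (dirX i) = _ := fun i =>
    lineDeriv₂_comp hk (hasLineDerivAt_coshGap_dirX · q i)
      (hasLineDerivAt_lineDeriv_coshGap_dirX p q i)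
  have hS : lineDeriv₂ (fun p => k (coshGap p q)) p dirS = _ :=
    lineDeriv₂_comp hk (hasLineDerivAt_coshGap_dirS · q) (hasLineDerivAt_lineDeriv_coshGap_dirS p q)
  have hS' : lineDeriv ℝ (fun p => k (coshGap p q)) p dirS = _ :=
    (hasLineDerivAt_comp (hk.differentiable two_ne_zero _).hasDerivAt
      (hasLineDerivAt_coshGap_dirS p q)).lineDeriv
  have hnorm : ∑ i, (p.1 i - q.1 i) ^ 2 = ‖p.1 - q.1‖ ^ 2 := by
    simp [EuclideanSpace.real_norm_sq_eq]
  have hexp : exp (2 * p.2) * exp (-(p.2 + q.2)) = cosh (p.2 - q.2) + sinh (p.2 - q.2) := by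
    rw [cosh_add_sinh, ← exp_add]
    ring_nf
  simp only [logLap, radialLap, hX, hS, hS', mul_pow, Finset.sum_add_distrib, ← Finset.mul_sum,
    ← Finset.sum_mul, hnorm, Finset.sum_const, Finset.card_univ, Fintype.card_fin, nsmul_eq_mul]
  have hgap : coshGap p q =
    ‖p.1 - q.1‖ ^ 2 * exp (-(p.2 + q.2)) / 2 + (cosh (p.2 - q.2) - 1) := rfl
  generalize deriv (deriv k) (coshGap p q) = k₂
  generalize deriv k (coshGap p q) = k₁
  rw [hgap]
  linear_combination (-k₂) * cosh_sq (p.2 - q.2) +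
    (k₂ * ‖p.1 - q.1‖ ^ 2 * exp (-(p.2 + q.2)) + n * k₁) * hexp

end Laplacian

section Kernel

variable {E F : Type*} [TopologicalSpace E] [TopologicalSpace F] [T2Space F] [MeasurableSpace F]
  [OpensMeasurableSpace F] {κ : E × F → ℝ} {μ : Measure F} {w : F → ℝ}

theorem integrable_kernel_mul (hκ : Continuous κ) (hs : LocallyCompactlySupported κ)
    (hw : LocallyIntegrable w μ) (z : E) : Integrable (fun q => κ (z, q) * w q) μ := by
  obtain ⟨T, hT, hT0⟩ := hs {z} isCompact_singleton
  exact hw.integrable_smul_left_of_hasCompactSupport (hκ.comp (Continuous.prodMk_right z))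
    (HasCompactSupport.intro hT fun q hq => hT0 z rfl q hq)

end Kernel

section LaplacianKernel

variable {n : ℕ} {F : Type*} [NormedAddCommGroup F] [NormedSpace ℝ F] [MeasurableSpace F]
  [BorelSpace F] {κ : LogHalfSpace n × F → ℝ} {μ : Measure F} {w : F → ℝ}

theorem logLap_integral_kernel (hκ : ContDiff ℝ 2 κ) (hs : LocallyCompactlySupported κ)
    (hw : LocallyIntegrable w μ) (p : LogHalfSpace n) :
    logLap n (fun p => ∫ q, κ (p, q) * w q ∂μ) p =
      ∫ q, logLap n (fun p => κ (p, q)) p * w q ∂μ := by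
  have hκ₁ := fun v : LogHalfSpace n =>
    contDiff_lineDeriv (m' := 1) hκ (by norm_num [one_add_one_eq_two]) (v, (0 : F))
  have first : ∀ p v, lineDeriv ℝ (fun p => ∫ q, κ (p, q) * w q ∂μ) p v =
      ∫ q, lineDeriv ℝ κ (p, q) (v, 0) * w q ∂μ := fun p v =>
    (hasLineDerivAt_integral_kernel (hκ.of_le one_le_two) hs hw p v).lineDeriv
  have second : ∀ v, lineDeriv₂ (fun p => ∫ q, κ (p, q) * w q ∂μ) p v =
      ∫ q, lineDeriv₂ κ (p, q) (v, 0) * w q ∂μ := fun v => by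
    simp only [lineDeriv₂, first]
    exact (hasLineDerivAt_integral_kernel (hκ₁ v) (hs.lineDeriv v) hw p v).lineDeriv
  have int₁ := fun v => integrable_kernel_mul (hκ₁ v).continuous (hs.lineDeriv v) hw p
  have int₂ : ∀ v : LogHalfSpace n,
      Integrable (fun q => lineDeriv₂ κ (p, q) (v, 0) * w q) μ := fun v =>
    integrable_kernel_mul (continuous_lineDeriv₂ hκ (v, 0)) ((hs.lineDeriv v).lineDeriv v) hw p
  have hslice : ∀ q v, lineDeriv₂ (fun p => κ (p, q)) p v = lineDeriv₂ κ (p, q) (v, 0) :=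
    fun q v => by
      simp only [lineDeriv₂, lineDeriv_prodMk_left]
      exact lineDeriv_prodMk_left (fun z => lineDeriv ℝ κ z (v, 0)) p v q
  have intX := (integrable_finsetSum Finset.univ fun i _ => int₂ (dirX i)).const_mul (exp (2 * p.2))
  simp only [logLap, hslice, first, second, lineDeriv_prodMk_left]
  rw [← integral_finsetSum _ fun i _ => int₂ (dirX i), ← integral_const_mul, ← integral_const_mul,
    ← integral_add intX (int₂ dirS), ← integral_sub (intX.fun_add (int₂ dirS))
      ((int₁ dirS).const_mul _)]
  refine integral_congr_ae (.of_forall fun q => ?_)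
  simp only [← Finset.sum_mul]
  ring

end LaplacianKernel

/-! ### Green's identity -/

section Green

variable {E : Type*} [NormedAddCommGroup E] [NormedSpace ℝ E] {ω φ h : E → ℝ}

/-- The flux in direction `v` of Green's identity with weight `ω`. -/
noncomputable def greenFlux (ω φ h : E → ℝ) (v p : E) : ℝ :=
  ω p * (lineDeriv ℝ φ p v * h p - φ p * lineDeriv ℝ h p v)

theorem contDiff_greenFlux (hω : ContDiff ℝ 1 ω) (hφ : ContDiff ℝ 2 φ) (hh : ContDiff ℝ 2 h)
    (v : E) : ContDiff ℝ 1 (greenFlux ω φ h v) :=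
  hω.mul (((contDiff_lineDeriv hφ (by norm_num [one_add_one_eq_two]) v).mul
    (hh.of_le one_le_two)).sub ((hφ.of_le one_le_two).mul
      (contDiff_lineDeriv hh (by norm_num [one_add_one_eq_two]) v)))

theorem hasCompactSupport_greenFlux (hc : HasCompactSupport φ) (v : E) :
    HasCompactSupport (greenFlux ω φ h v) :=
  ((hasCompactSupport_lineDeriv hc v).mul_right.sub hc.mul_right).mul_left

theorem lineDeriv_greenFlux (hω : ContDiff ℝ 1 ω) (hφ : ContDiff ℝ 2 φ) (hh : ContDiff ℝ 2 h)
    (v p : E) : lineDeriv ℝ (greenFlux ω φ h v) p v =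
      lineDeriv ℝ ω p v * (lineDeriv ℝ φ p v * h p - φ p * lineDeriv ℝ h p v) +
        ω p * (lineDeriv₂ φ p v * h p - φ p * lineDeriv₂ h p v) := by
  have hd := fun f (hf : ContDiff ℝ 1 f) => hasLineDerivAt_of_contDiff hf one_ne_zero p v
  have hd₂ := fun f (hf : ContDiff ℝ 2 f) =>
    hd _ (contDiff_lineDeriv hf (by norm_num [one_add_one_eq_two]) v)
  have hflux : HasLineDerivAt ℝ (greenFlux ω φ h v) _ p v := hasLineDerivAt_mul (hd ω hω)
    (HasDerivAt.fun_sub (hasLineDerivAt_mul (hd₂ φ hφ) (hd h (hh.of_le one_le_two)))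
      (hasLineDerivAt_mul (hd φ (hφ.of_le one_le_two)) (hd₂ h hh)))
  rw [hflux.lineDeriv]
  simp only [lineDeriv₂]
  ring

variable [MeasurableSpace E] [BorelSpace E] {μ : Measure E}

theorem integrable_lineDeriv [IsFiniteMeasureOnCompacts μ] {f : E → ℝ} (hf : ContDiff ℝ 1 f)
    (hc : HasCompactSupport f) (v : E) : Integrable (fun p => lineDeriv ℝ f p v) μ :=
  (continuous_lineDeriv hf v).integrable_of_hasCompactSupport (hasCompactSupport_lineDeriv hc v)

theorem integral_lineDeriv_eq_zero [FiniteDimensional ℝ E] [μ.IsAddHaarMeasure] {f : E → ℝ}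
    (hf : ContDiff ℝ 1 f) (hc : HasCompactSupport f) (v : E) : ∫ p, lineDeriv ℝ f p v ∂μ = 0 := by
  have hint := integrable_lineDeriv (μ := μ) hf hc v
  simp only [(hf.differentiable one_ne_zero _).lineDeriv_eq_fderiv] at hint ⊢
  simpa using integral_mul_fderiv_eq_neg_fderiv_mul_of_integrable (𝕜 := ℝ) (μ := μ)
    (f := fun _ => (1 : ℝ)) (g := f) (v := v) (by simp) (by simpa using hint)
    (by simpa using hf.continuous.integrable_of_hasCompactSupport hc)
    (fun _ _ => by fun_prop) (fun x _ => hf.differentiable one_ne_zero x)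

end Green

section HypVol

variable {n : ℕ}

/-- The hyperbolic volume `exp (-n s) dx ds`. -/
noncomputable def hypVol (n : ℕ) : Measure (LogHalfSpace n) :=
  volume.withDensity fun p => ENNReal.ofReal (exp (-(n * p.2)))

instance : IsLocallyFiniteMeasure (hypVol n) :=
  IsLocallyFiniteMeasure.withDensity_ofReal (by fun_prop)

instance : (hypVol n).IsOpenPosMeasure :=
  (withDensity_absolutelyContinuous' (by fun_prop)
    (.of_forall fun _ => by simp [exp_pos])).isOpenPosMeasure

theorem integral_hypVol (f : LogHalfSpace n → ℝ) :
    ∫ p, f p ∂hypVol n = ∫ p, exp (-(n * p.2)) * f p := by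
  rw [hypVol, integral_withDensity_eq_integral_toReal_smul (by fun_prop) (by simp)]
  simp [exp_nonneg]

/-- The density of `hypVol` makes `logLap` symmetric. -/
theorem exp_mul_logLap_sub_eq_sum_greenFlux {φ h : LogHalfSpace n → ℝ} (hφ : ContDiff ℝ 2 φ)
    (hh : ContDiff ℝ 2 h) (p : LogHalfSpace n) :
    exp (-(n * p.2)) * (logLap n φ p * h p) - exp (-(n * p.2)) * (φ p * logLap n h p) =
      ∑ i, lineDeriv ℝ (greenFlux (fun p => exp (2 * p.2) * exp (-(n * p.2))) φ h (dirX i)) p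
        (dirX i) + lineDeriv ℝ (greenFlux (fun p => exp (-(n * p.2))) φ h dirS) p dirS := by
  have hX : ∀ i, lineDeriv ℝ (fun p : LogHalfSpace n => exp (2 * p.2) * exp (-(n * p.2))) p
      (dirX i) = 0 := fun i => by simp [lineDeriv, dirX]
  have hS : lineDeriv ℝ (fun p : LogHalfSpace n => exp (-(n * p.2))) p dirS =
      -n * exp (-(n * p.2)) := by
    have hder := (((hasDerivAt_id 0).const_add p.2).const_mul (n : ℝ)).fun_neg.exp
    refine ((hder.congr_deriv ?_).congr_of_eventuallyEq (.of_forall fun t => ?_)).deriv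
    · simp [mul_comm]
    · simp [dirS]
  rw [lineDeriv_greenFlux (by fun_prop) hφ hh, hS]
  simp only [lineDeriv_greenFlux (ω := fun p : LogHalfSpace n => exp (2 * p.2) * exp (-(n * p.2)))
    (by fun_prop) hφ hh, hX, logLap, zero_mul, zero_add, ← Finset.mul_sum, Finset.sum_sub_distrib,
    ← Finset.sum_mul]
  ring

theorem integral_logLap_mul {φ h : LogHalfSpace n → ℝ} (hφ : ContDiff ℝ 2 φ)
    (hc : HasCompactSupport φ) (hh : ContDiff ℝ 2 h) :
    ∫ p, logLap n φ p * h p ∂hypVol n = ∫ p, φ p * logLap n h p ∂hypVol n := by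
  have : (volume : Measure (LogHalfSpace n)).IsAddHaarMeasure :=
    Measure.prod.instIsAddHaarMeasure volume volume
  set fluxX := fun i : Fin n => greenFlux (fun p => exp (2 * p.2) * exp (-(n * p.2))) φ h (dirX i)
  set fluxS := greenFlux (fun p : LogHalfSpace n => exp (-(n * p.2))) φ h dirS
  have hX : ∀ i, ContDiff ℝ 1 (fluxX i) := fun i => contDiff_greenFlux (by fun_prop) hφ hh _
  have hS : ContDiff ℝ 1 fluxS := contDiff_greenFlux (by fun_prop) hφ hh _
  have hcX : ∀ i, HasCompactSupport (fluxX i) := fun i => hasCompactSupport_greenFlux hc _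
  have hcS : HasCompactSupport fluxS := hasCompactSupport_greenFlux hc _
  have intX := fun i => integrable_lineDeriv (μ := volume) (hX i) (hcX i) (dirX i)
  have intS := integrable_lineDeriv (μ := volume) hS hcS dirS
  have int_right : Integrable fun p => exp (-(n * p.2)) * (φ p * logLap n h p) :=
    ((by fun_prop : Continuous fun p : LogHalfSpace n => exp (-(n * p.2))).mul
      (hφ.continuous.mul (continuous_logLap hh))).integrable_of_hasCompactSupport
        hc.mul_right.mul_left
  have hdiff := exp_mul_logLap_sub_eq_sum_greenFlux hφ hh
  have int_left : Integrable fun p => exp (-(n * p.2)) * (logLap n φ p * h p) := by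
    refine (((integrable_finsetSum Finset.univ fun i _ => intX i).add intS).add int_right).congr
      (.of_forall fun p => ?_)
    simp only [Pi.add_apply]
    rw [← hdiff p, sub_add_cancel]
  rw [integral_hypVol, integral_hypVol, ← sub_eq_zero, ← integral_sub int_left int_right]
  simp only [hdiff]
  rw [integral_add (integrable_finsetSum _ fun i _ => intX i) intS,
    integral_finsetSum _ fun i _ => intX i, integral_lineDeriv_eq_zero hS hcS]
  simp [integral_lineDeriv_eq_zero (hX _) (hcX _)]

end HypVol

/-! ### Radial convolution operators -/

theorem sq_div_two_le_cosh_sub_one (x : ℝ) : x ^ 2 / 2 ≤ cosh x - 1 := by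
  have half_angle : cosh x = 1 + 2 * sinh (x / 2) ^ 2 := by
    have := cosh_two_mul (x / 2)
    rw [cosh_sq, mul_div_cancel₀ x two_ne_zero] at this
    linarith
  have habs : |x / 2| ≤ |sinh (x / 2)| := by
    rw [abs_sinh]
    exact self_le_sinh_iff.2 (abs_nonneg _)
  linarith [sq_le_sq.2 habs, div_pow x 2 2]

section RadialConv

variable {n : ℕ}

theorem sq_sub_snd_le_of_coshGap_le {p q : LogHalfSpace n} {r : ℝ} (h : coshGap p q ≤ r) :
    (p.2 - q.2) ^ 2 ≤ 2 * r := by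
  have := sq_div_two_le_cosh_sub_one (p.2 - q.2)
  have : 0 ≤ ‖p.1 - q.1‖ ^ 2 * exp (-(p.2 + q.2)) / 2 := by positivity
  unfold coshGap at h
  linarith

theorem sq_norm_sub_fst_le_of_coshGap_le {p q : LogHalfSpace n} {r : ℝ} (h : coshGap p q ≤ r) :
    ‖p.1 - q.1‖ ^ 2 ≤ 2 * r * exp (p.2 + q.2) := by
  rw [← mul_inv_le_iff₀ (exp_pos _), ← exp_neg]
  have := one_le_cosh (p.2 - q.2)
  unfold coshGap at h
  linarith

theorem dist_le_of_coshGap_le {p q : LogHalfSpace n} {r : ℝ} (h : coshGap p q ≤ r) :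
    dist p q ≤ √(2 * r) * exp (|p.2| + √(2 * r)) := by
  set A := √(2 * r)
  have hA : A ^ 2 = 2 * r := sq_sqrt (by linarith [coshGap_nonneg p q])
  have hsnd : |p.2 - q.2| ≤ A :=
    abs_le_of_sq_le_sq (by rw [hA]; exact sq_sub_snd_le_of_coshGap_le h) (sqrt_nonneg _)
  have hsum : p.2 + q.2 ≤ 2 * (|p.2| + A) := by
    linarith [le_abs_self p.2, (abs_le.1 hsnd).1, sqrt_nonneg (2 * r)]
  have one_le : 1 ≤ exp (|p.2| + A) := one_le_exp (by positivity)
  refine max_le ?_ (hsnd.trans (le_mul_of_one_le_right (sqrt_nonneg _) one_le))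
  rw [dist_eq_norm]
  refine le_of_sq_le_sq ?_ (by positivity)
  calc ‖p.1 - q.1‖ ^ 2 ≤ A ^ 2 * exp (p.2 + q.2) := by
        rw [hA]; exact sq_norm_sub_fst_le_of_coshGap_le h
    _ ≤ A ^ 2 * exp (2 * (|p.2| + A)) := by gcongr
    _ = (A * exp (|p.2| + A)) ^ 2 := by rw [mul_pow, ← exp_nat_mul]; norm_num

theorem exists_isCompact_lt_coshGap (r : ℝ) {S : Set (LogHalfSpace n)} (hS : IsCompact S) :
    ∃ T : Set (LogHalfSpace n), IsCompact T ∧ ∀ p ∈ S, ∀ q ∉ T, r < coshGap p q := by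
  obtain ⟨δ, hδ⟩ := (hS.image (f := fun p => √(2 * r) * exp (|p.2| + √(2 * r)))
    (by fun_prop)).bddAbove
  refine ⟨Metric.cthickening δ S, hS.cthickening, fun p hp q hq => ?_⟩
  by_contra! h
  refine hq (Metric.mem_cthickening_of_dist_le q p δ S hp ?_)
  rw [dist_comm]
  exact (dist_le_of_coshGap_le h).trans (hδ (mem_image_of_mem _ hp))

/-- A function of `t = coshGap p q` of class `C^m` that is supported in `t ≤ r`, the profile of a
radial kernel. -/
structure IsRadialProfile (m : WithTop ℕ∞) (r : ℝ) (k : ℝ → ℝ) : Prop where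
  contDiff : ContDiff ℝ m k
  eq_zero : ∀ t, r < t → k t = 0

/-- The convolution of `w` with the radial kernel of profile `k`. -/
noncomputable def radialConv (n : ℕ) (k : ℝ → ℝ) (w : LogHalfSpace n → ℝ) (p : LogHalfSpace n) :
    ℝ :=
  ∫ q, k (coshGap p q) * w q ∂hypVol n

theorem radialConv_const_mul (k : ℝ → ℝ) (c : ℝ) (w : LogHalfSpace n → ℝ) (p : LogHalfSpace n) :
    radialConv n k (fun q => c * w q) p = c * radialConv n k w p := by
  simp only [radialConv, ← integral_const_mul, mul_left_comm c]

namespace IsRadialProfile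

variable {m m' : WithTop ℕ∞} {r : ℝ} {k : ℝ → ℝ}

theorem of_le (h : IsRadialProfile m r k) (hm : m' ≤ m) : IsRadialProfile m' r k :=
  ⟨h.contDiff.of_le hm, h.eq_zero⟩

theorem continuous (h : IsRadialProfile m r k) : Continuous k := h.contDiff.continuous

protected theorem deriv (h : IsRadialProfile m r k) (hm : m' + 1 ≤ m) :
    IsRadialProfile m' r (deriv k) := by
  refine ⟨(h.contDiff.of_le hm).deriv', fun t ht => ?_⟩
  have hk : k =ᶠ[𝓝 t] fun _ => 0 := eventually_of_mem (Ioi_mem_nhds ht) h.eq_zero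
  simp [hk.deriv_eq]

protected theorem radialLap (h : IsRadialProfile m r k) (hm : m' + 2 ≤ m) (n : ℕ) :
    IsRadialProfile m' r (radialLap n k) := by
  have h₁ : IsRadialProfile (m' + 1) r _ := h.deriv (by rwa [add_assoc, one_add_one_eq_two])
  have h₂ : IsRadialProfile m' r _ := h₁.deriv le_rfl
  have := h₁.contDiff.of_le le_self_add
  have := h₂.contDiff
  exact ⟨by unfold radialLap; fun_prop, fun t ht => by
    simp [radialLap, h₁.eq_zero t ht, h₂.eq_zero t ht]⟩

theorem locallyCompactlySupported (h : IsRadialProfile m r k) : LocallyCompactlySupported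
    (fun z : LogHalfSpace n × LogHalfSpace n => k (coshGap z.1 z.2)) := fun _ hS =>
  (exists_isCompact_lt_coshGap r hS).imp fun _ ⟨hT, hlt⟩ =>
    ⟨hT, fun z hz q hq => h.eq_zero _ (hlt z hz q hq)⟩

theorem contDiff_kernel (h : IsRadialProfile m r k) :
    ContDiff ℝ m (fun z : LogHalfSpace n × LogHalfSpace n => k (coshGap z.1 z.2)) :=
  h.contDiff.comp (contDiff_coshGap contDiff_fst contDiff_snd)

variable {w f g : LogHalfSpace n → ℝ}

theorem integrable (h : IsRadialProfile m r k) (hw : Continuous w) (p : LogHalfSpace n) :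
    Integrable (fun q => k (coshGap p q) * w q) (hypVol n) :=
  integrable_kernel_mul h.contDiff_kernel.continuous h.locallyCompactlySupported
    hw.locallyIntegrable p

theorem contDiff_radialConv (h : IsRadialProfile 2 r k) (hw : Continuous w) :
    ContDiff ℝ 2 (radialConv n k w) :=
  contDiff_integral_kernel (m := 2) h.contDiff_kernel h.locallyCompactlySupported
    hw.locallyIntegrable

theorem radialConv_add (h : IsRadialProfile m r k) (hf : Continuous f) (hg : Continuous g)
    (p : LogHalfSpace n) :
    radialConv n k (fun p => f p + g p) p = radialConv n k f p + radialConv n k g p := by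
  simp only [radialConv, mul_add]
  exact integral_add (h.integrable hf p) (h.integrable hg p)

theorem logLap_radialConv (h : IsRadialProfile 2 r k) (hw : Continuous w) (p : LogHalfSpace n) :
    logLap n (radialConv n k w) p = radialConv n (radialLap n k) w p := by
  have := logLap_integral_kernel (μ := hypVol n) h.contDiff_kernel h.locallyCompactlySupported
    hw.locallyIntegrable p
  simp only [logLap_comp_coshGap h.contDiff] at this
  exact this

theorem radialConv_radialLap (h : IsRadialProfile 2 r k) (hw : ContDiff ℝ 2 w)
    (p : LogHalfSpace n) :
    radialConv n (radialLap n k) w p = radialConv n k (logLap n w) p := by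
  have hc : HasCompactSupport fun q => k (coshGap q p) := by
    obtain ⟨T, hT, hT0⟩ := h.locallyCompactlySupported {p} isCompact_singleton
    exact HasCompactSupport.intro hT fun q hq => by
      simpa only [coshGap_comm q] using hT0 p rfl q hq
  have hφ : ContDiff ℝ 2 fun q => k (coshGap q p) :=
    h.contDiff.comp (contDiff_coshGap contDiff_id contDiff_const)
  have := integral_logLap_mul hφ hc hw
  simp only [logLap_comp_coshGap h.contDiff] at this
  simp only [radialConv, coshGap_comm p]
  exact this

theorem radialConv_eq_logLap_radialConv_add {b : ℝ → ℝ} {c : ℝ} (h : IsRadialProfile 2 r k)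
    (hb : ∀ t, b t = radialLap n k t + c * k t) (hw : Continuous w) (p : LogHalfSpace n) :
    radialConv n b w p = logLap n (radialConv n k w) p + c * radialConv n k w p := by
  have hlap : IsRadialProfile 0 r (radialLap n k) := h.radialLap (by norm_num) n
  rw [h.logLap_radialConv hw]
  simp only [radialConv]
  rw [← integral_const_mul,
    ← integral_add (hlap.integrable hw p) ((h.integrable hw p).const_mul _)]
  exact integral_congr_ae (.of_forall fun q => by simp only [hb]; ring)

theorem radialConv_comm {b : ℝ → ℝ} {c : ℝ} (h : IsRadialProfile 2 r k)
    (hb : ∀ t, b t = radialLap n k t + c * k t) (hw : Continuous w) (p : LogHalfSpace n) :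
    radialConv n k (radialConv n b w) p = radialConv n b (radialConv n k w) p := by
  have hkw : ContDiff ℝ 2 (radialConv n k w) := h.contDiff_radialConv hw
  rw [funext (h.radialConv_eq_logLap_radialConv_add hb hw),
    h.radialConv_add (continuous_logLap hkw) (hkw.continuous.const_mul c), radialConv_const_mul,
    h.radialConv_eq_logLap_radialConv_add hb hkw.continuous, h.logLap_radialConv hkw.continuous,
    h.radialConv_radialLap hkw]

end IsRadialProfile

end RadialConv

/-! ### Operators acting in one factor of a product -/

section LocallyCompactlySupported

variable {E E' F F' : Type*} [TopologicalSpace E] [TopologicalSpace E'] [TopologicalSpace F]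
  [TopologicalSpace F'] {κ : E × F → ℝ}

theorem continuous_integral_kernel {Y : Type*} [TopologicalSpace Y] [LocallyCompactSpace E]
    [MeasurableSpace F] [OpensMeasurableSpace F] {μ : Measure F} [IsFiniteMeasureOnCompacts μ]
    (hκ : Continuous κ) (hs : LocallyCompactlySupported κ) {f : Y × F → ℝ} (hf : Continuous f) :
    Continuous fun x : E × Y => ∫ q, κ (x.1, q) * f (x.2, q) ∂μ := by
  refine continuous_iff_continuousAt.2 fun x => ?_
  obtain ⟨S, hS, hSx⟩ := exists_compact_mem_nhds x.1
  obtain ⟨T, hT, hT0⟩ := hs S hS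
  refine (continuousOn_integral_of_compact_support (s := S ×ˢ univ) hT
    (Continuous.continuousOn ?_) fun y q hy hq => ?_).continuousAt (prod_mem_nhds hSx univ_mem)
  · exact (hκ.comp (by fun_prop)).mul (hf.comp (by fun_prop))
  · rw [hT0 y.1 hy.1 q hq, zero_mul]

theorem LocallyCompactlySupported.prod_mul {κ' : E' × F' → ℝ} (hs : LocallyCompactlySupported κ)
    (hs' : LocallyCompactlySupported κ') : LocallyCompactlySupported
      (fun y : (E × E') × (F × F') => κ (y.1.1, y.2.1) * κ' (y.1.2, y.2.2)) := by
  intro S hS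
  obtain ⟨T, hT, hT0⟩ := hs (Prod.fst '' S) (hS.image continuous_fst)
  obtain ⟨T', hT', hT0'⟩ := hs' (Prod.snd '' S) (hS.image continuous_snd)
  refine ⟨T ×ˢ T', hT.prod hT', fun z hz q hq => ?_⟩
  obtain hq | hq := not_and_or.1 hq
  · simp only [hT0 z.1 (mem_image_of_mem _ hz) q.1 hq, zero_mul]
  · simp only [hT0' z.2 (mem_image_of_mem _ hz) q.2 hq, mul_zero]

end LocallyCompactlySupported

section ProductOperators

variable {n₁ n₂ : ℕ}

/-- `radialConv` in the first variable. -/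
noncomputable def radialConvFst (k : ℝ → ℝ) (w : LogHalfSpace n₁ × LogHalfSpace n₂ → ℝ)
    (z : LogHalfSpace n₁ × LogHalfSpace n₂) : ℝ :=
  radialConv n₁ k (fun p => w (p, z.2)) z.1

/-- `radialConv` in the second variable. -/
noncomputable def radialConvSnd (k : ℝ → ℝ) (w : LogHalfSpace n₁ × LogHalfSpace n₂ → ℝ)
    (z : LogHalfSpace n₁ × LogHalfSpace n₂) : ℝ :=
  radialConv n₂ k (fun q => w (z.1, q)) z.2

/-- `logLap` in the first variable, i.e. `Δ₁`. -/
noncomputable def logLapFst (w : LogHalfSpace n₁ × LogHalfSpace n₂ → ℝ)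
    (z : LogHalfSpace n₁ × LogHalfSpace n₂) : ℝ :=
  logLap n₁ (fun p => w (p, z.2)) z.1

/-- `logLap` in the second variable, i.e. `Δ₂`. -/
noncomputable def logLapSnd (w : LogHalfSpace n₁ × LogHalfSpace n₂ → ℝ)
    (z : LogHalfSpace n₁ × LogHalfSpace n₂) : ℝ :=
  logLap n₂ (fun q => w (z.1, q)) z.2

theorem radialConvSnd_eq_radialConvFst_swap (k : ℝ → ℝ)
    (w : LogHalfSpace n₁ × LogHalfSpace n₂ → ℝ) :
    radialConvSnd k w = fun z => radialConvFst k (fun y => w y.swap) z.swap := rfl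

theorem logLapSnd_eq_logLapFst_swap (w : LogHalfSpace n₁ × LogHalfSpace n₂ → ℝ) :
    logLapSnd w = fun z => logLapFst (fun y => w y.swap) z.swap := rfl

variable {w : LogHalfSpace n₁ × LogHalfSpace n₂ → ℝ}

theorem continuous_logLapFst (hw : ContDiff ℝ 2 w) : Continuous (logLapFst w) := by
  have hfirst := fun v => continuous_lineDeriv (hw.of_le one_le_two) v
  have hsecond := fun v => continuous_lineDeriv₂ hw v
  have hslice : ∀ (z : LogHalfSpace n₁ × LogHalfSpace n₂) v,
      lineDeriv₂ (fun p => w (p, z.2)) z.1 v = lineDeriv₂ w z (v, 0) := fun z v => by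
    simp only [lineDeriv₂, lineDeriv_prodMk_left]
    exact lineDeriv_prodMk_left (fun y => lineDeriv ℝ w y (v, 0)) z.1 v z.2
  unfold logLapFst logLap
  simp only [hslice, lineDeriv_prodMk_left]
  fun_prop

theorem continuous_logLapSnd (hw : ContDiff ℝ 2 w) : Continuous (logLapSnd w) := by
  rw [logLapSnd_eq_logLapFst_swap]
  have := continuous_logLapFst (hw.comp (contDiff_snd.prodMk contDiff_fst))
  exact this.comp continuous_swap

theorem logLapFst_const_mul (c : ℝ) (w : LogHalfSpace n₁ × LogHalfSpace n₂ → ℝ)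
    (z : LogHalfSpace n₁ × LogHalfSpace n₂) :
    logLapFst (fun z => c * w z) z = c * logLapFst w z :=
  logLap_const_mul c (fun p => w (p, z.2)) z.1

theorem logLapSnd_const_mul (c : ℝ) (w : LogHalfSpace n₁ × LogHalfSpace n₂ → ℝ)
    (z : LogHalfSpace n₁ × LogHalfSpace n₂) :
    logLapSnd (fun z => c * w z) z = c * logLapSnd w z :=
  logLap_const_mul c (fun q => w (z.1, q)) z.2

namespace IsRadialProfile

variable {m m' : WithTop ℕ∞} {r r₁ r₂ : ℝ} {k k₁ k₂ : ℝ → ℝ}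

theorem continuous_radialConv_prod {n : ℕ} {Y : Type*} [TopologicalSpace Y]
    (h : IsRadialProfile m r k) {f : Y × LogHalfSpace n → ℝ} (hf : Continuous f) :
    Continuous fun x : LogHalfSpace n × Y => radialConv n k (fun q => f (x.2, q)) x.1 :=
  continuous_integral_kernel h.contDiff_kernel.continuous h.locallyCompactlySupported hf

theorem continuous_radialConvFst (h : IsRadialProfile m r k) (hw : Continuous w) :
    Continuous (radialConvFst k w) :=
  h.continuous_radialConv_prod (hw.comp continuous_swap)

theorem continuous_radialConvSnd (h : IsRadialProfile m r k) (hw : Continuous w) :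
    Continuous (radialConvSnd k w) := by
  rw [radialConvSnd_eq_radialConvFst_swap]
  have := h.continuous_radialConvFst (hw.comp continuous_swap)
  exact this.comp continuous_swap

theorem logLapFst_radialConvFst (h : IsRadialProfile 2 r k) (hw : Continuous w)
    (z : LogHalfSpace n₁ × LogHalfSpace n₂) :
    logLapFst (radialConvFst k w) z = radialConvFst (radialLap n₁ k) w z :=
  h.logLap_radialConv (w := fun p => w (p, z.2)) (hw.comp (by fun_prop)) z.1

theorem logLapSnd_radialConvSnd (h : IsRadialProfile 2 r k) (hw : Continuous w)
    (z : LogHalfSpace n₁ × LogHalfSpace n₂) :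
    logLapSnd (radialConvSnd k w) z = radialConvSnd (radialLap n₂ k) w z :=
  h.logLap_radialConv (w := fun q => w (z.1, q)) (hw.comp (by fun_prop)) z.2

theorem radialConvFst_radialLap (h : IsRadialProfile 2 r k) (hw : ContDiff ℝ 2 w)
    (z : LogHalfSpace n₁ × LogHalfSpace n₂) :
    radialConvFst (radialLap n₁ k) w z = radialConvFst k (logLapFst w) z :=
  h.radialConv_radialLap (hw.comp (by fun_prop)) z.1

theorem radialConvSnd_radialLap (h : IsRadialProfile 2 r k) (hw : ContDiff ℝ 2 w)
    (z : LogHalfSpace n₁ × LogHalfSpace n₂) :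
    radialConvSnd (radialLap n₂ k) w z = radialConvSnd k (logLapSnd w) z :=
  h.radialConv_radialLap (hw.comp (by fun_prop)) z.2

theorem contDiff_prodKernel (h₁ : IsRadialProfile m r₁ k₁) (h₂ : IsRadialProfile m r₂ k₂) :
    ContDiff ℝ m fun y : (LogHalfSpace n₁ × LogHalfSpace n₂) ×
      (LogHalfSpace n₁ × LogHalfSpace n₂) => k₁ (coshGap y.1.1 y.2.1) * k₂ (coshGap y.1.2 y.2.2) :=
  (h₁.contDiff.comp (contDiff_coshGap (by fun_prop) (by fun_prop))).mul
    (h₂.contDiff.comp (contDiff_coshGap (by fun_prop) (by fun_prop)))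

theorem integrable_prodKernel_mul (h₁ : IsRadialProfile m r₁ k₁) (h₂ : IsRadialProfile m' r₂ k₂)
    (hw : Continuous w) (z : LogHalfSpace n₁ × LogHalfSpace n₂) :
    Integrable (fun y => k₁ (coshGap z.1 y.1) * k₂ (coshGap z.2 y.2) * w y)
      ((hypVol n₁).prod (hypVol n₂)) :=
  integrable_kernel_mul ((h₁.of_le zero_le).contDiff_prodKernel (h₂.of_le zero_le)).continuous
    (h₁.locallyCompactlySupported.prod_mul h₂.locallyCompactlySupported) hw.locallyIntegrable z

theorem radialConvFst_radialConvSnd (h₁ : IsRadialProfile m r₁ k₁)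
    (h₂ : IsRadialProfile m' r₂ k₂) (hw : Continuous w) (z : LogHalfSpace n₁ × LogHalfSpace n₂) :
    radialConvFst k₁ (radialConvSnd k₂ w) z =
      ∫ y, k₁ (coshGap z.1 y.1) * k₂ (coshGap z.2 y.2) * w y ∂(hypVol n₁).prod (hypVol n₂) := by
  rw [integral_prod _ (h₁.integrable_prodKernel_mul h₂ hw z)]
  simp only [radialConvFst, radialConvSnd, radialConv, ← integral_const_mul, mul_assoc]

theorem radialConvSnd_radialConvFst (h₁ : IsRadialProfile m r₁ k₁)
    (h₂ : IsRadialProfile m' r₂ k₂) (hw : Continuous w) (z : LogHalfSpace n₁ × LogHalfSpace n₂) :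
    radialConvSnd k₂ (radialConvFst k₁ w) z = radialConvFst k₁ (radialConvSnd k₂ w) z := by
  rw [h₁.radialConvFst_radialConvSnd h₂ hw, integral_prod_symm _
    (h₁.integrable_prodKernel_mul h₂ hw z)]
  simp only [radialConvFst, radialConvSnd, radialConv, ← integral_const_mul, mul_assoc,
    mul_left_comm (k₁ _)]

theorem contDiff_radialConvFst_radialConvSnd (h₁ : IsRadialProfile 2 r₁ k₁)
    (h₂ : IsRadialProfile 2 r₂ k₂) (hw : Continuous w) :
    ContDiff ℝ 2 (radialConvFst k₁ (radialConvSnd k₂ w)) := by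
  rw [funext (h₁.radialConvFst_radialConvSnd h₂ hw)]
  exact contDiff_integral_kernel (m := 2) (h₁.contDiff_prodKernel h₂)
    (h₁.locallyCompactlySupported.prod_mul h₂.locallyCompactlySupported) hw.locallyIntegrable

end IsRadialProfile

end ProductOperators

/-! ### A weak Harnack inequality -/

theorem hasDerivAt_max_zero_pow (j : ℕ) (x : ℝ) :
    HasDerivAt (fun x : ℝ => max x 0 ^ (j + 2)) ((j + 2) * max x 0 ^ (j + 1)) x := by
  have away : ∀ y : ℝ, y ≠ 0 →
      HasDerivAt (fun x : ℝ => max x 0 ^ (j + 2)) ((j + 2) * max y 0 ^ (j + 1)) y := by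
    intro y hy
    obtain hy | hy := hy.lt_or_gt
    · rw [max_eq_right hy.le, zero_pow j.succ_ne_zero, mul_zero]
      refine (hasDerivAt_const y (0 : ℝ)).congr_of_eventuallyEq ?_
      filter_upwards [Iio_mem_nhds hy] with x hx
      rw [max_eq_right hx.le, zero_pow (by omega)]
    · rw [max_eq_left hy.le]
      refine HasDerivAt.congr_of_eventuallyEq (f := fun x => x ^ (j + 2))
        (by simpa using hasDerivAt_pow (j + 2) y) ?_
      filter_upwards [Ioi_mem_nhds hy] with x hx
      rw [max_eq_left hx.le]
  obtain rfl | hx := eq_or_ne x 0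
  · exact hasDerivAt_of_hasDerivAt_of_ne away (by fun_prop) (by fun_prop)
  · exact away x hx

theorem contDiff_max_zero_pow (j : ℕ) : ContDiff ℝ j (fun x : ℝ => max x 0 ^ (j + 1)) := by
  induction j with
  | zero => exact contDiff_zero.2 (by fun_prop)
  | succ j ih =>
    rw [Nat.cast_add, Nat.cast_one, contDiff_succ_iff_deriv]
    refine ⟨fun x => (hasDerivAt_max_zero_pow j x).differentiableAt, by simp, ?_⟩
    rw [funext fun x => (hasDerivAt_max_zero_pow j x).deriv]
    exact contDiff_const.mul ih

theorem isRadialProfile_max_sub_pow (j : ℕ) (r : ℝ) :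
    IsRadialProfile j r (fun t => max (r - t) 0 ^ (j + 1)) :=
  ⟨(contDiff_max_zero_pow j).comp (contDiff_const.sub contDiff_id), fun t ht => by
    rw [max_eq_right (by linarith), zero_pow j.succ_ne_zero]⟩

theorem hasDerivAt_max_sub_pow (j : ℕ) (r t : ℝ) :
    HasDerivAt (fun t => max (r - t) 0 ^ (j + 2)) (-((j + 2) * max (r - t) 0 ^ (j + 1))) t :=
  (hasDerivAt_max_zero_pow j (r - t)).comp_const_sub r t

section ProdGap

variable {n₁ n₂ : ℕ}

/-- The sum of the `coshGap`s of the two components, which measures the distance of two points of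
the product. -/
noncomputable def prodGap (z y : LogHalfSpace n₁ × LogHalfSpace n₂) : ℝ :=
  coshGap z.1 y.1 + coshGap z.2 y.2

theorem prodGap_nonneg (z y : LogHalfSpace n₁ × LogHalfSpace n₂) : 0 ≤ prodGap z y :=
  add_nonneg (coshGap_nonneg _ _) (coshGap_nonneg _ _)

theorem fst_le_prodGap (z y : LogHalfSpace n₁ × LogHalfSpace n₂) :
    coshGap z.1 y.1 ≤ prodGap z y :=
  le_add_of_nonneg_right (coshGap_nonneg _ _)

theorem snd_le_prodGap (z y : LogHalfSpace n₁ × LogHalfSpace n₂) :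
    coshGap z.2 y.2 ≤ prodGap z y :=
  le_add_of_nonneg_left (coshGap_nonneg _ _)

@[fun_prop]
theorem contDiff_prodGap {m : WithTop ℕ∞} (z : LogHalfSpace n₁ × LogHalfSpace n₂) :
    ContDiff ℝ m (prodGap z) :=
  (contDiff_coshGap contDiff_const contDiff_fst).add (contDiff_coshGap contDiff_const contDiff_snd)

@[fun_prop]
theorem continuous_prodGap (z : LogHalfSpace n₁ × LogHalfSpace n₂) : Continuous (prodGap z) :=
  (contDiff_prodGap (m := 0) z).continuous

theorem isCompact_prodGap_le (z : LogHalfSpace n₁ × LogHalfSpace n₂) (r : ℝ) :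
    IsCompact {y | prodGap z y ≤ r} := by
  obtain ⟨T₁, hT₁, h₁⟩ := exists_isCompact_lt_coshGap r (isCompact_singleton (x := z.1))
  obtain ⟨T₂, hT₂, h₂⟩ := exists_isCompact_lt_coshGap r (isCompact_singleton (x := z.2))
  refine (hT₁.prod hT₂).of_isClosed_subset
    (isClosed_le (continuous_prodGap z) continuous_const) fun y hy => ?_
  by_contra hyT
  obtain hy₁ | hy₂ := not_and_or.1 hyT
  · exact (h₁ _ rfl _ hy₁).not_ge ((fst_le_prodGap z y).trans hy)
  · exact (h₂ _ rfl _ hy₂).not_ge ((snd_le_prodGap z y).trans hy)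

theorem integrable_of_prodGap_support {f : LogHalfSpace n₁ × LogHalfSpace n₂ → ℝ}
    (hf : Continuous f) {z : LogHalfSpace n₁ × LogHalfSpace n₂} {r : ℝ}
    (hr : ∀ y, r < prodGap z y → f y = 0) : Integrable f ((hypVol n₁).prod (hypVol n₂)) :=
  hf.integrable_of_hasCompactSupport
    (HasCompactSupport.intro (isCompact_prodGap_le z r) fun y hy => hr y (not_le.1 hy))

theorem radialLap_comp_add_const (n : ℕ) (k : ℝ → ℝ) (c t : ℝ) :
    radialLap n (fun t => k (t + c)) t = (t ^ 2 + 2 * t) * deriv (deriv k) (t + c) +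
      (n + 1) * (1 + t) * deriv k (t + c) := by
  have hderiv : deriv (fun t => k (t + c)) = fun t => deriv k (t + c) :=
    funext fun t => deriv_comp_add_const k c t
  rw [radialLap, hderiv, deriv_comp_add_const]

variable {F : ℝ → ℝ} {r μ : ℝ} {u : LogHalfSpace n₁ × LogHalfSpace n₂ → ℝ}

theorem IsRadialProfile.integrable_radialLap_prodGap_fst (hF : IsRadialProfile 2 r F)
    (hu : Continuous u) (z : LogHalfSpace n₁ × LogHalfSpace n₂) :
    Integrable (fun y => radialLap n₁ (fun t => F (t + coshGap z.2 y.2)) (coshGap z.1 y.1) * u y)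
      ((hypVol n₁).prod (hypVol n₂)) := by
  have hF₁ : IsRadialProfile 1 r _ := hF.deriv (by norm_num [one_add_one_eq_two])
  have hF₂ : IsRadialProfile 0 r _ := hF₁.deriv (by norm_num)
  have := hF₁.continuous.comp (continuous_prodGap z)
  have := hF₂.continuous.comp (continuous_prodGap z)
  simp only [radialLap_comp_add_const]
  refine integrable_of_prodGap_support (z := z) (r := r) ?_ fun y hy => ?_
  · change Continuous fun y => ((coshGap z.1 y.1 ^ 2 + 2 * coshGap z.1 y.1) *
      (deriv (deriv F) ∘ prodGap z) y + (n₁ + 1) * (1 + coshGap z.1 y.1) *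
        (deriv F ∘ prodGap z) y) * u y
    fun_prop
  · rw [← prodGap, hF₁.eq_zero _ hy, hF₂.eq_zero _ hy]
    ring

theorem IsRadialProfile.integral_radialLap_prodGap_fst (hF : IsRadialProfile 2 r F)
    (hu : ContDiff ℝ 2 u) (z : LogHalfSpace n₁ × LogHalfSpace n₂) :
    ∫ y, radialLap n₁ (fun t => F (t + coshGap z.2 y.2)) (coshGap z.1 y.1) * u y
        ∂(hypVol n₁).prod (hypVol n₂) =
      ∫ y, F (prodGap z y) * logLapFst u y ∂(hypVol n₁).prod (hypVol n₂) := by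
  have hshift : ∀ q, IsRadialProfile 2 r (fun t => F (t + coshGap z.2 q)) := fun q =>
    ⟨hF.contDiff.comp (by fun_prop), fun t ht => hF.eq_zero _ (by
      linarith [coshGap_nonneg z.2 q])⟩
  have hint : Integrable (fun y => F (prodGap z y) * logLapFst u y)
      ((hypVol n₁).prod (hypVol n₂)) :=
    integrable_of_prodGap_support
      ((hF.continuous.comp (continuous_prodGap z)).mul (continuous_logLapFst hu))
      fun y hy => by rw [hF.eq_zero _ hy, zero_mul]
  rw [integral_prod_symm _ (hF.integrable_radialLap_prodGap_fst hu.continuous z),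
    integral_prod_symm _ hint]
  congr 1 with q
  exact (hshift q).radialConv_radialLap (w := fun p => u (p, q)) (hu.comp (by fun_prop)) z.1

theorem prodGap_swap (z y : LogHalfSpace n₁ × LogHalfSpace n₂) :
    prodGap z.swap y.swap = prodGap z y :=
  add_comm _ _

theorem IsRadialProfile.integrable_radialLap_prodGap_snd (hF : IsRadialProfile 2 r F)
    (hu : Continuous u) (z : LogHalfSpace n₁ × LogHalfSpace n₂) :
    Integrable (fun y => radialLap n₂ (fun t => F (t + coshGap z.1 y.1)) (coshGap z.2 y.2) * u y)
      ((hypVol n₁).prod (hypVol n₂)) :=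
  (hF.integrable_radialLap_prodGap_fst (hu.comp continuous_swap) z.swap).swap

theorem IsRadialProfile.integral_radialLap_prodGap_snd (hF : IsRadialProfile 2 r F)
    (hu : ContDiff ℝ 2 u) (z : LogHalfSpace n₁ × LogHalfSpace n₂) :
    ∫ y, radialLap n₂ (fun t => F (t + coshGap z.1 y.1)) (coshGap z.2 y.2) * u y
        ∂(hypVol n₁).prod (hypVol n₂) =
      ∫ y, F (prodGap z y) * logLapSnd u y ∂(hypVol n₁).prod (hypVol n₂) := by
  have := hF.integral_radialLap_prodGap_fst (hu.comp (contDiff_snd.prodMk contDiff_fst)) z.swap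
  rw [← integral_prod_swap, ← integral_prod_swap (fun y => F (prodGap z y) * _)]
  simp only [logLapSnd_eq_logLapFst_swap, ← prodGap_swap z, Prod.swap_swap]
  exact this

theorem IsRadialProfile.integral_prodGap_mul_eq_zero (hF : IsRadialProfile 2 r F)
    (hu : ContDiff ℝ 2 u) (heq : ∀ y, logLapFst u y + logLapSnd u y = -(μ * u y))
    (z : LogHalfSpace n₁ × LogHalfSpace n₂) :
    ∫ y, ((coshGap z.1 y.1 ^ 2 + coshGap z.2 y.2 ^ 2 + 2 * prodGap z y) *
        deriv (deriv F) (prodGap z y) +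
      ((n₁ + 1) * (1 + coshGap z.1 y.1) + (n₂ + 1) * (1 + coshGap z.2 y.2)) *
        deriv F (prodGap z y) + μ * F (prodGap z y)) * u y ∂(hypVol n₁).prod (hypVol n₂) = 0 := by
  have hcont := hF.continuous.comp (continuous_prodGap z)
  have hint : ∀ {w}, Continuous w → Integrable (fun y => F (prodGap z y) * w y)
      ((hypVol n₁).prod (hypVol n₂)) := fun hw =>
    integrable_of_prodGap_support (hcont.mul hw) fun y hy => by rw [hF.eq_zero _ hy, zero_mul]
  have hfst := hF.integrable_radialLap_prodGap_fst hu.continuous z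
  have hsnd := hF.integrable_radialLap_prodGap_snd hu.continuous z
  calc _ = ∫ y, (radialLap n₁ (fun t => F (t + coshGap z.2 y.2)) (coshGap z.1 y.1) * u y +
          radialLap n₂ (fun t => F (t + coshGap z.1 y.1)) (coshGap z.2 y.2) * u y) +
          μ * (F (prodGap z y) * u y) ∂(hypVol n₁).prod (hypVol n₂) := by
        congr 1 with y
        rw [radialLap_comp_add_const, radialLap_comp_add_const, add_comm (coshGap z.2 y.2),
          ← prodGap]
        simp only [prodGap]
        ring
    _ = (∫ y, F (prodGap z y) * (logLapFst u y + logLapSnd u y) ∂(hypVol n₁).prod (hypVol n₂)) +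
          μ * ∫ y, F (prodGap z y) * u y ∂(hypVol n₁).prod (hypVol n₂) := by
        rw [integral_add (hfst.fun_add hsnd) ((hint hu.continuous).const_mul μ),
          integral_add hfst hsnd,
          hF.integral_radialLap_prodGap_fst hu, hF.integral_radialLap_prodGap_snd hu,
          ← integral_add (hint (continuous_logLapFst hu))
            (hint (continuous_logLapSnd hu)),
          integral_const_mul]
        simp only [mul_add]
    _ = 0 := by
        simp only [heq, mul_neg, mul_left_comm _ μ, integral_neg, integral_const_mul,
          neg_add_cancel]

/-- The integral of `u` against a bump of radius `τ` around `z`; it behaves like a power of `τ`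
times the mean of `u` near `z`. -/
noncomputable def bumpIntegral (u : LogHalfSpace n₁ × LogHalfSpace n₂ → ℝ)
    (z : LogHalfSpace n₁ × LogHalfSpace n₂) (τ : ℝ) : ℝ :=
  ∫ y, max (τ - prodGap z y) 0 ^ 2 * u y ∂(hypVol n₁).prod (hypVol n₂)

theorem integrable_bump_mul {f : LogHalfSpace n₁ × LogHalfSpace n₂ → ℝ} (hf : Continuous f)
    (z : LogHalfSpace n₁ × LogHalfSpace n₂) (τ : ℝ) (j : ℕ) :
    Integrable (fun y => max (τ - prodGap z y) 0 ^ (j + 1) * f y)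
      ((hypVol n₁).prod (hypVol n₂)) :=
  integrable_of_prodGap_support (z := z) (r := τ) (by fun_prop) fun y hy => by
    rw [max_eq_right (by linarith), zero_pow j.succ_ne_zero, zero_mul]

theorem hasDerivAt_bumpIntegral (hu : Continuous u) (z : LogHalfSpace n₁ × LogHalfSpace n₂)
    (τ : ℝ) : HasDerivAt (bumpIntegral u z)
      (2 * ∫ y, max (τ - prodGap z y) 0 * u y ∂(hypVol n₁).prod (hypVol n₂)) τ := by
  set κ : ℝ × (LogHalfSpace n₁ × LogHalfSpace n₂) → ℝ := fun y =>
    max (y.1 - prodGap z y.2) 0 ^ (0 + 2)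
  have hκ : ContDiff ℝ 1 κ := (contDiff_max_zero_pow 1).comp
    (contDiff_fst.sub ((contDiff_prodGap z).comp contDiff_snd))
  have hs : LocallyCompactlySupported κ := fun S hS => by
    obtain ⟨b, hb⟩ := hS.bddAbove
    refine ⟨_, isCompact_prodGap_le z b, fun τ hτ y hy => ?_⟩
    have : τ < prodGap z y := (hb hτ).trans_lt (not_le.1 hy)
    simp only [κ, max_eq_right (sub_nonpos.2 this.le), zero_add, ne_eq, two_ne_zero,
      not_false_eq_true, zero_pow]
  have hderiv : ∀ y, lineDeriv ℝ κ (τ, y) (1, 0) = 2 * max (τ - prodGap z y) 0 := fun y => by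
    have h := (hasDerivAt_max_zero_pow 0 (τ - prodGap z y)).comp_sub_const τ (prodGap z y)
    rw [← lineDeriv_prodMk_left, (h.hasFDerivAt.hasLineDerivAt 1).lineDeriv]
    simp
  have hline := hasLineDerivAt_integral_kernel hκ hs hu.locallyIntegrable
    (μ := (hypVol n₁).prod (hypVol n₂)) τ 1
  simp only [hderiv, mul_assoc, integral_const_mul] at hline
  have hshift : HasDerivAt (fun t => bumpIntegral u z (τ + t))
      (2 * ∫ y, max (τ - prodGap z y) 0 * u y ∂(hypVol n₁).prod (hypVol n₂)) (τ - τ) := by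
    simpa [HasLineDerivAt, bumpIntegral, κ] using hline
  simpa using hshift.comp_sub_const τ τ

/-- The error term in `mul_deriv_bumpIntegral`. -/
noncomputable def bumpError (μ : ℝ) (z : LogHalfSpace n₁ × LogHalfSpace n₂) (τ : ℝ)
    (y : LogHalfSpace n₁ × LogHalfSpace n₂) : ℝ :=
  ((n₁ + 1) * coshGap z.1 y.1 + (n₂ + 1) * coshGap z.2 y.2) / 2 * max (τ - prodGap z y) 0 ^ 2 -
    (coshGap z.1 y.1 ^ 2 + coshGap z.2 y.2 ^ 2) * max (τ - prodGap z y) 0 -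
    μ / 6 * max (τ - prodGap z y) 0 ^ 3

theorem integrable_bumpError_mul (μ : ℝ) (hu : Continuous u)
    (z : LogHalfSpace n₁ × LogHalfSpace n₂) (τ : ℝ) :
    Integrable (fun y => bumpError μ z τ y * u y) ((hypVol n₁).prod (hypVol n₂)) := by
  unfold bumpError
  refine integrable_of_prodGap_support (z := z) (r := τ) (by fun_prop) fun y hy => ?_
  rw [max_eq_right (by linarith)]
  ring

/-- Green's identity against `F (ρ) = max (τ - ρ) 0 ^ 3`, in which `ρ F'' (ρ)` is expressed by
`τ F'' (ρ)` and `F' (ρ)`. -/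
theorem mul_deriv_bumpIntegral (hu : ContDiff ℝ 2 u)
    (heq : ∀ y, logLapFst u y + logLapSnd u y = -(μ * u y))
    (z : LogHalfSpace n₁ × LogHalfSpace n₂) (τ : ℝ) :
    τ * deriv (bumpIntegral u z) τ = (n₁ + n₂ + 6) / 2 * bumpIntegral u z τ +
      ∫ y, bumpError μ z τ y * u y ∂(hypVol n₁).prod (hypVol n₂) := by
  have hd₁ : deriv (fun t => max (τ - t) 0 ^ 3) = fun t => -3 * max (τ - t) 0 ^ 2 :=
    funext fun t => (hasDerivAt_max_sub_pow 1 τ t).deriv.trans (by norm_num)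
  have hd₂ : deriv (fun t => -3 * max (τ - t) 0 ^ 2) = fun t => 6 * max (τ - t) 0 :=
    funext fun t => ((hasDerivAt_max_sub_pow 0 τ t).const_mul (-3)).deriv.trans (by
      push_cast; ring)
  have hgreen := (isRadialProfile_max_sub_pow 2 τ).integral_prodGap_mul_eq_zero hu heq z
  rw [hd₁, hd₂] at hgreen
  have hint := integrable_bump_mul hu.continuous z τ 0
  have hint₂ := integrable_bump_mul hu.continuous z τ 1
  simp only [zero_add, pow_one, one_add_one_eq_two] at hint hint₂
  have hsplit := integral_sub (hint.const_mul (12 * τ))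
    ((hint₂.const_mul (3 * (n₁ + n₂ + 6))).fun_add
      ((integrable_bumpError_mul μ hu.continuous z τ).const_mul 6))
  rw [integral_add (hint₂.const_mul _) ((integrable_bumpError_mul μ hu.continuous z τ).const_mul 6),
    integral_const_mul, integral_const_mul, integral_const_mul] at hsplit
  rw [(hasDerivAt_bumpIntegral hu.continuous z τ).deriv, bumpIntegral]
  suffices h : ∫ y, 12 * τ * (max (τ - prodGap z y) 0 * u y) -
      (3 * (n₁ + n₂ + 6) * (max (τ - prodGap z y) 0 ^ 2 * u y) + 6 * (bumpError μ z τ y * u y))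
      ∂(hypVol n₁).prod (hypVol n₂) = 0 by linarith
  refine Eq.trans (integral_congr_ae (.of_forall fun y => ?_)) hgreen
  simp only [bumpError]
  obtain hle | hlt := le_or_gt τ (prodGap z y)
  · rw [max_eq_right (sub_nonpos.2 hle)]
    ring
  · rw [max_eq_left (sub_nonneg.2 hlt.le)]
    ring

theorem bumpError_le (μ : ℝ) (z y : LogHalfSpace n₁ × LogHalfSpace n₂) (τ : ℝ) :
    bumpError μ z τ y ≤
      ((n₁ + n₂ + 2) / 2 + |μ| / 6) * τ * max (τ - prodGap z y) 0 ^ 2 := by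
  unfold bumpError
  obtain hle | hlt := le_or_gt τ (prodGap z y)
  · simp [max_eq_right (sub_nonpos.2 hle)]
  have hP : 0 < τ - prodGap z y := sub_pos.2 hlt
  rw [max_eq_left hP.le]
  have h₁ : coshGap z.1 y.1 ≤ τ := (fst_le_prodGap z y).trans hlt.le
  have h₂ : coshGap z.2 y.2 ≤ τ := (snd_le_prodGap z y).trans hlt.le
  have hμ : -μ / 6 * (τ - prodGap z y) ≤ |μ| / 6 * τ :=
    mul_le_mul (by gcongr; exact neg_le_abs μ) (sub_le_self _ (prodGap_nonneg z y)) hP.le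
      (by positivity)
  have hB : (n₁ + 1) * coshGap z.1 y.1 + (n₂ + 1) * coshGap z.2 y.2 ≤
      (n₁ + 1) * τ + (n₂ + 1) * τ := by gcongr
  calc _ ≤ (((n₁ + 1) * coshGap z.1 y.1 + (n₂ + 1) * coshGap z.2 y.2) / 2 +
          -μ / 6 * (τ - prodGap z y)) * (τ - prodGap z y) ^ 2 := by
        have : 0 ≤ (coshGap z.1 y.1 ^ 2 + coshGap z.2 y.2 ^ 2) * (τ - prodGap z y) := by positivity
        linarith
    _ ≤ _ := by gcongr; linarith

theorem neg_le_bumpError (z y : LogHalfSpace n₁ × LogHalfSpace n₂) (τ : ℝ) :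
    -(τ ^ 2 * max (τ - prodGap z y) 0) ≤ bumpError 0 z τ y := by
  unfold bumpError
  obtain hle | hlt := le_or_gt τ (prodGap z y)
  · simp [max_eq_right (sub_nonpos.2 hle)]
  have hP : 0 < τ - prodGap z y := sub_pos.2 hlt
  rw [max_eq_left hP.le]
  have h₁ := coshGap_nonneg z.1 y.1
  have h₂ := coshGap_nonneg z.2 y.2
  have hsq : coshGap z.1 y.1 ^ 2 + coshGap z.2 y.2 ^ 2 ≤ τ ^ 2 := by
    have hτ := pow_le_pow_left₀ (prodGap_nonneg z y) hlt.le 2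
    rw [prodGap] at hτ
    nlinarith [mul_nonneg h₁ h₂]
  have : 0 ≤ ((n₁ + 1) * coshGap z.1 y.1 + (n₂ + 1) * coshGap z.2 y.2) / 2 *
      (τ - prodGap z y) ^ 2 := by positivity
  linarith [mul_le_mul_of_nonneg_right hsq hP.le]

theorem mul_deriv_bumpIntegral_le (hu : ContDiff ℝ 2 u) (hnonneg : ∀ y, 0 ≤ u y)
    (heq : ∀ y, logLapFst u y + logLapSnd u y = -(μ * u y))
    (z : LogHalfSpace n₁ × LogHalfSpace n₂) (τ : ℝ) :
    τ * deriv (bumpIntegral u z) τ ≤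
      ((n₁ + n₂ + 6) / 2 + ((n₁ + n₂ + 2) / 2 + |μ| / 6) * τ) * bumpIntegral u z τ := by
  have herr := integral_mono (integrable_bumpError_mul μ hu.continuous z τ)
    ((integrable_bump_mul hu.continuous z τ 1).const_mul (((n₁ + n₂ + 2) / 2 + |μ| / 6) * τ))
    fun y => (mul_le_mul_of_nonneg_right (bumpError_le μ z y τ) (hnonneg y)).trans_eq
      (mul_assoc _ _ _)
  rw [integral_const_mul] at herr
  rw [mul_deriv_bumpIntegral hu heq, add_mul]
  gcongr
  exact herr

theorem le_mul_deriv_bumpIntegral_one (z : LogHalfSpace n₁ × LogHalfSpace n₂) (τ : ℝ) :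
    (n₁ + n₂ + 6) / 2 * bumpIntegral (fun _ => 1) z τ ≤
      (τ + τ ^ 2 / 2) * deriv (bumpIntegral (fun _ => 1) z) τ := by
  have hone := integrable_bump_mul (continuous_const (y := (1 : ℝ))) z τ 0
  have herr := integral_mono (hone.const_mul (-τ ^ 2))
    (integrable_bumpError_mul 0 (continuous_const (y := (1 : ℝ))) z τ) fun y => by
      simpa using neg_le_bumpError z y τ
  have heq : ∀ y : LogHalfSpace n₁ × LogHalfSpace n₂,
      logLapFst (fun _ => 1) y + logLapSnd (fun _ => 1) y = -(0 * 1) := fun y => by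
    simp [logLapFst, logLapSnd, logLap, lineDeriv₂, lineDeriv]
  have hderiv := (hasDerivAt_bumpIntegral (continuous_const (y := (1 : ℝ))) z τ).deriv
  have := mul_deriv_bumpIntegral contDiff_const heq z τ
  rw [integral_const_mul] at herr
  simp only [zero_add, pow_one] at herr
  rw [hderiv] at this ⊢
  linarith

end ProdGap

section Peak

variable {X : Type*} [TopologicalSpace X] [MeasurableSpace X] {ν : Measure X} {d w : X → ℝ} {x₀ : X}
  {j : ℕ}

theorem integral_max_sub_pow_pos [ν.IsOpenPosMeasure] (hd : Continuous d) (hd₀ : d x₀ = 0) {τ : ℝ}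
    (hint : Integrable (fun x => max (τ - d x) 0 ^ (j + 1)) ν) (hτ : 0 < τ) :
    0 < ∫ x, max (τ - d x) 0 ^ (j + 1) ∂ν :=
  integral_pos_of_integrable_nonneg_nonzero (x := x₀) (by fun_prop) hint
    (fun x => by positivity) (by rw [hd₀, sub_zero, max_eq_left hτ.le]; positivity)

theorem tendsto_integral_max_sub_pow_mul_div [ν.IsOpenPosMeasure] (hd : Continuous d)
    (hd₀ : d x₀ = 0) (hsmall : ∀ U ∈ 𝓝 x₀, ∀ᶠ τ in 𝓝[>] 0, ∀ x, d x ≤ τ → x ∈ U)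
    (hint : ∀ τ, Integrable (fun x => max (τ - d x) 0 ^ (j + 1)) ν)
    (hintw : ∀ τ, Integrable (fun x => max (τ - d x) 0 ^ (j + 1) * w x) ν)
    (hw : ContinuousAt w x₀) :
    Tendsto (fun τ => (∫ x, max (τ - d x) 0 ^ (j + 1) * w x ∂ν) /
      ∫ x, max (τ - d x) 0 ^ (j + 1) ∂ν) (𝓝[>] 0) (𝓝 (w x₀)) := by
  rw [Metric.tendsto_nhds]
  intro ε hε
  have hU : ∀ᶠ x in 𝓝 x₀, dist (w x) (w x₀) < ε / 2 :=
    Metric.tendsto_nhds.1 hw _ (half_pos hε)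
  filter_upwards [hsmall _ hU, self_mem_nhdsWithin] with τ hτU hτ
  have hpos := integral_max_sub_pow_pos hd hd₀ (hint τ) hτ
  have hpoint : ∀ x, ‖max (τ - d x) 0 ^ (j + 1) * w x - max (τ - d x) 0 ^ (j + 1) * w x₀‖ ≤
      max (τ - d x) 0 ^ (j + 1) * (ε / 2) := fun x => by
    rw [← mul_sub, norm_mul, norm_of_nonneg (by positivity)]
    obtain hle | hlt := le_or_gt (d x) τ
    · exact mul_le_mul_of_nonneg_left (hτU x hle).le (by positivity)
    · simp [max_eq_right (sub_neg.2 hlt).le]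
  have hnorm := norm_integral_le_of_norm_le ((hint τ).mul_const (ε / 2)) (.of_forall hpoint)
  rw [integral_sub (hintw τ) ((hint τ).mul_const _), integral_mul_const,
    integral_mul_const] at hnorm
  rw [dist_eq_norm, div_sub' hpos.ne', norm_div, norm_of_nonneg hpos.le, div_lt_iff₀ hpos]
  exact hnorm.trans_lt (by nlinarith)

end Peak

theorem eventually_forall_mem_of_coshGap_le {n : ℕ} {p : LogHalfSpace n}
    {U : Set (LogHalfSpace n)} (hU : U ∈ 𝓝 p) :
    ∀ᶠ τ in 𝓝[>] (0 : ℝ), ∀ q, coshGap p q ≤ τ → q ∈ U := by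
  obtain ⟨ε, hε, hball⟩ := Metric.mem_nhds_iff.1 hU
  have hradius : Tendsto (fun τ : ℝ => √(2 * τ) * exp (|p.2| + √(2 * τ))) (𝓝 0) (𝓝 0) := by
    have : Continuous fun τ : ℝ => √(2 * τ) * exp (|p.2| + √(2 * τ)) := by fun_prop
    simpa using this.tendsto 0
  filter_upwards [nhdsWithin_le_nhds (hradius.eventually_lt_const hε)] with τ hτ q hq
  exact hball (Metric.mem_ball'.2 ((dist_le_of_coshGap_le hq).trans_lt hτ))

section ProdGap

variable {n₁ n₂ : ℕ} {μ : ℝ} {u : LogHalfSpace n₁ × LogHalfSpace n₂ → ℝ}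

theorem eventually_forall_mem_of_prodGap_le {z : LogHalfSpace n₁ × LogHalfSpace n₂}
    {U : Set (LogHalfSpace n₁ × LogHalfSpace n₂)} (hU : U ∈ 𝓝 z) :
    ∀ᶠ τ in 𝓝[>] (0 : ℝ), ∀ y, prodGap z y ≤ τ → y ∈ U := by
  obtain ⟨U₁, hU₁, U₂, hU₂, hsub⟩ := mem_nhds_prod_iff.1 hU
  filter_upwards [eventually_forall_mem_of_coshGap_le hU₁,
    eventually_forall_mem_of_coshGap_le hU₂] with τ h₁ h₂ y hy
  exact hsub ⟨h₁ _ ((fst_le_prodGap z y).trans hy), h₂ _ ((snd_le_prodGap z y).trans hy)⟩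

theorem prodGap_self (z : LogHalfSpace n₁ × LogHalfSpace n₂) : prodGap z z = 0 := by
  simp [prodGap, coshGap_self]

theorem bumpIntegral_one_pos (z : LogHalfSpace n₁ × LogHalfSpace n₂) {τ : ℝ} (hτ : 0 < τ) :
    0 < bumpIntegral (fun _ => 1) z τ := by
  have hint := integrable_bump_mul (continuous_const (y := (1 : ℝ))) z τ 1
  simp only [mul_one] at hint
  simpa [bumpIntegral] using
    integral_max_sub_pow_pos (continuous_prodGap z) (prodGap_self z) hint hτ

theorem tendsto_bumpIntegral_div (hu : Continuous u) (z : LogHalfSpace n₁ × LogHalfSpace n₂) :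
    Tendsto (fun τ => bumpIntegral u z τ / bumpIntegral (fun _ => 1) z τ) (𝓝[>] 0) (𝓝 (u z)) := by
  have hint := fun τ => integrable_bump_mul (continuous_const (y := (1 : ℝ))) z τ 1
  simp only [mul_one] at hint
  simpa [bumpIntegral] using tendsto_integral_max_sub_pow_mul_div (continuous_prodGap z)
    (prodGap_self z) (fun U hU => eventually_forall_mem_of_prodGap_le hU) hint
    (integrable_bump_mul hu z · 1) hu.continuousAt

/-- The exponential rate at which `bumpIntegral u z / bumpIntegral 1 z` may grow. -/
noncomputable def bumpRate (n₁ n₂ : ℕ) (μ : ℝ) : ℝ :=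
  (n₁ + n₂ + 2) / 2 + |μ| / 6 + (n₁ + n₂ + 6) / 4

theorem bumpIntegral_nonneg (hnonneg : ∀ y, 0 ≤ u y) (z : LogHalfSpace n₁ × LogHalfSpace n₂)
    (τ : ℝ) : 0 ≤ bumpIntegral u z τ :=
  integral_nonneg fun y => mul_nonneg (by positivity) (hnonneg y)

theorem deriv_bumpIntegral_mul_le (hu : ContDiff ℝ 2 u) (hnonneg : ∀ y, 0 ≤ u y)
    (heq : ∀ y, logLapFst u y + logLapSnd u y = -(μ * u y))
    (z : LogHalfSpace n₁ × LogHalfSpace n₂) {τ : ℝ} (hτ : 0 < τ) :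
    deriv (bumpIntegral u z) τ * bumpIntegral (fun _ => 1) z τ ≤
      bumpIntegral u z τ * deriv (bumpIntegral (fun _ => 1) z) τ +
        bumpRate n₁ n₂ μ * (bumpIntegral u z τ * bumpIntegral (fun _ => 1) z τ) := by
  have hA := bumpIntegral_nonneg hnonneg z τ
  have hB := (bumpIntegral_one_pos z hτ).le
  have hupper := mul_deriv_bumpIntegral_le hu hnonneg heq z τ
  have hlower : (n₁ + n₂ + 6) / 2 * (1 - τ / 2) * bumpIntegral (fun _ => 1) z τ ≤
      τ * deriv (bumpIntegral (fun _ => 1) z) τ := by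
    have := le_mul_deriv_bumpIntegral_one z τ
    refine le_of_mul_le_mul_left ?_ (by positivity : 0 < 1 + τ / 2)
    have : 0 ≤ (n₁ + n₂ + 6) / 2 * (τ ^ 2 / 4) * bumpIntegral (fun _ => 1) z τ := by positivity
    linarith
  refine le_of_mul_le_mul_left ?_ hτ
  rw [bumpRate]
  linarith [mul_le_mul_of_nonneg_right hupper hB, mul_le_mul_of_nonneg_left hlower hA]

theorem antitoneOn_bumpIntegral_div (hu : ContDiff ℝ 2 u) (hnonneg : ∀ y, 0 ≤ u y)
    (heq : ∀ y, logLapFst u y + logLapSnd u y = -(μ * u y))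
    (z : LogHalfSpace n₁ × LogHalfSpace n₂) :
    AntitoneOn (fun τ => bumpIntegral u z τ / bumpIntegral (fun _ => 1) z τ *
      exp (-(bumpRate n₁ n₂ μ * τ))) (Ioi 0) := by
  have hder : ∀ τ ∈ Ioi (0 : ℝ), HasDerivAt (fun τ => bumpIntegral u z τ /
      bumpIntegral (fun _ => 1) z τ * exp (-(bumpRate n₁ n₂ μ * τ))) _ τ := fun τ hτ =>
    (((hasDerivAt_bumpIntegral hu.continuous z τ).differentiableAt.hasDerivAt).fun_div
      (hasDerivAt_bumpIntegral continuous_const z τ).differentiableAt.hasDerivAt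
      (bumpIntegral_one_pos z hτ).ne').fun_mul
      (((hasDerivAt_id' τ).const_mul (bumpRate n₁ n₂ μ)).fun_neg.exp)
  refine antitoneOn_of_deriv_nonpos (convex_Ioi 0)
    (fun τ hτ => (hder τ hτ).continuousAt.continuousWithinAt)
    (fun τ hτ => (hder τ (interior_subset hτ)).differentiableAt.differentiableWithinAt)
    fun τ hτ => ?_
  have hτ := interior_subset hτ
  have hB := bumpIntegral_one_pos z hτ
  have hslope : (deriv (bumpIntegral u z) τ * bumpIntegral (fun _ => 1) z τ - bumpIntegral u z τ *
      deriv (bumpIntegral (fun _ => 1) z) τ) / bumpIntegral (fun _ => 1) z τ ^ 2 ≤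
      bumpRate n₁ n₂ μ * (bumpIntegral u z τ / bumpIntegral (fun _ => 1) z τ) := by
    rw [div_le_iff₀ (by positivity)]
    field_simp
    linarith [deriv_bumpIntegral_mul_le hu hnonneg heq z hτ]
  rw [(hder τ hτ).deriv]
  linarith [mul_le_mul_of_nonneg_right hslope (exp_pos (-(bumpRate n₁ n₂ μ * τ))).le]

theorem bumpIntegral_le (hu : ContDiff ℝ 2 u) (hnonneg : ∀ y, 0 ≤ u y)
    (heq : ∀ y, logLapFst u y + logLapSnd u y = -(μ * u y))
    (z : LogHalfSpace n₁ × LogHalfSpace n₂) {τ : ℝ} (hτ : 0 < τ) :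
    bumpIntegral u z τ ≤
      exp (bumpRate n₁ n₂ μ * τ) * bumpIntegral (fun _ => 1) z τ * u z := by
  have hlim : Tendsto (fun τ => bumpIntegral u z τ / bumpIntegral (fun _ => 1) z τ *
      exp (-(bumpRate n₁ n₂ μ * τ))) (𝓝[>] 0) (𝓝 (u z)) := by
    have hexp : Continuous fun τ => exp (-(bumpRate n₁ n₂ μ * τ)) := by fun_prop
    simpa using (tendsto_bumpIntegral_div hu.continuous z).mul
      (hexp.continuousAt (x := 0).mono_left nhdsWithin_le_nhds)
  have hle : bumpIntegral u z τ / bumpIntegral (fun _ => 1) z τ *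
      exp (-(bumpRate n₁ n₂ μ * τ)) ≤ u z := by
    refine ge_of_tendsto hlim ?_
    filter_upwards [Ioo_mem_nhdsGT hτ] with s hs
    exact antitoneOn_bumpIntegral_div hu hnonneg heq z hs.1 hτ hs.2.le
  have hpos := mul_pos (bumpIntegral_one_pos z hτ) (exp_pos (bumpRate n₁ n₂ μ * τ))
  rw [exp_neg, ← div_eq_mul_inv, div_div, div_le_iff₀ hpos] at hle
  linarith

end ProdGap

section Mass

variable {n : ℕ}

theorem integral_smul_fst (f : LogHalfSpace n → ℝ) {c : ℝ} (hc : 0 < c) :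
    ∫ q : LogHalfSpace n, f (c • q.1, q.2) = (c ^ n)⁻¹ * ∫ q, f q := by
  let scale := (Homeomorph.smulOfNeZero (α := EuclideanSpace ℝ (Fin n)) c hc.ne').prodCongr
    (Homeomorph.refl ℝ)
  have hmap : (volume : Measure (LogHalfSpace n)).map scale =
      ENNReal.ofReal (c ^ n)⁻¹ • volume := by
    change ((volume : Measure (EuclideanSpace ℝ (Fin n))).prod (volume : Measure ℝ)).map
      (Prod.map (c • ·) id) = _
    rw [← Measure.map_prod_map _ _ (by fun_prop) measurable_id, Measure.map_addHaar_smul _ hc.ne',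
      Measure.map_id, Measure.prod_smul_left, finrank_euclideanSpace_fin,
      abs_of_pos (by positivity), Measure.volume_eq_prod]
  have := scale.measurableEmbedding.integral_map (μ := volume) f
  rw [hmap, integral_smul_measure, ENNReal.toReal_ofReal (by positivity)] at this
  exact this.symm

theorem integral_hypVol_translate (f : LogHalfSpace n → ℝ) (p : LogHalfSpace n) :
    ∫ q, f (p.1 + exp p.2 • q.1, p.2 + q.2) ∂hypVol n = ∫ q, f q ∂hypVol n := by
  have hshift := integral_add_left_eq_self
    (μ := (volume : Measure (EuclideanSpace ℝ (Fin n))).prod (volume : Measure ℝ))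
    (fun q => exp (-(n * q.2)) * f q) p
  have hscale := integral_smul_fst (fun q => exp (-(n * (p + q).2)) * f (p + q)) (exp_pos p.2)
  rw [Measure.volume_eq_prod, hshift, eq_inv_mul_iff_mul_eq₀ (by positivity),
    ← integral_const_mul] at hscale
  rw [integral_hypVol, integral_hypVol, Measure.volume_eq_prod, ← hscale]
  congr 1 with q
  rw [← mul_assoc, ← exp_nat_mul, ← exp_add]
  congr 2
  simp only [Prod.snd_add]
  ring

theorem coshGap_translate (p q : LogHalfSpace n) :
    coshGap p (p.1 + exp p.2 • q.1, p.2 + q.2) = coshGap 0 q := by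
  have hexp : exp p.2 ^ 2 * exp (-(p.2 + (p.2 + q.2))) = exp (-q.2) := by
    rw [← exp_nat_mul, ← exp_add]
    congr 1
    push_cast
    ring
  simp only [coshGap, sub_add_cancel_left, norm_neg, norm_smul, norm_of_nonneg (exp_pos p.2).le,
    mul_pow, cosh_neg, Prod.fst_zero, Prod.snd_zero, zero_sub, zero_add, ← hexp]
  ring

/-- The integral of the radial kernel of profile `k`, around any point. -/
noncomputable def radialMass (n : ℕ) (k : ℝ → ℝ) : ℝ :=
  ∫ q, k (coshGap 0 q) ∂hypVol n

theorem radialConv_const (k : ℝ → ℝ) (c : ℝ) (p : LogHalfSpace n) :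
    radialConv n k (fun _ => c) p = radialMass n k * c := by
  rw [radialConv, integral_mul_const, ← integral_hypVol_translate _ p]
  simp only [coshGap_translate, radialMass]

end Mass

section Harnack

variable {n₁ n₂ : ℕ} {m m' : WithTop ℕ∞} {r r₁ r₂ : ℝ} {k k₁ k₂ : ℝ → ℝ}

theorem exists_bumpIntegral_one_le (n₁ n₂ : ℕ) (τ : ℝ) :
    ∃ D, ∀ z : LogHalfSpace n₁ × LogHalfSpace n₂, bumpIntegral (fun _ => 1) z τ ≤ D := by
  let k : ℝ → ℝ := fun t => max (τ - t) 0 ^ (0 + 1)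
  have hk : IsRadialProfile (0 : ℕ) τ k := isRadialProfile_max_sub_pow 0 τ
  refine ⟨radialMass n₁ k * (radialMass n₂ k * 1), fun z => ?_⟩
  rw [← radialConv_const _ (1 : ℝ) z.2, ← radialConv_const _ _ z.1]
  refine (integral_mono (integrable_bump_mul continuous_const z τ 1)
    (hk.integrable_prodKernel_mul hk continuous_const z) fun y => ?_).trans_eq
    (hk.radialConvFst_radialConvSnd hk continuous_const z).symm
  simp only [k, mul_one, zero_add, pow_one, one_add_one_eq_two, sq]
  gcongr
  exacts [fst_le_prodGap z y, snd_le_prodGap z y]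

theorem IsRadialProfile.exists_abs_le (h : IsRadialProfile m r k) :
    ∃ M, 0 ≤ M ∧ ∀ t, 0 ≤ t → |k t| ≤ M := by
  obtain ⟨M, hM⟩ := (isCompact_Icc (a := 0) (b := r)).exists_bound_of_continuousOn
    h.continuous.continuousOn
  refine ⟨max M 0, le_max_right _ _, fun t ht => ?_⟩
  obtain hle | hlt := le_or_gt t r
  · exact (hM t ⟨ht, hle⟩).trans (le_max_left _ _)
  · rw [h.eq_zero t hlt, abs_zero]
    exact le_max_right _ _

theorem IsRadialProfile.exists_mul_le_bump (h₁ : IsRadialProfile m r₁ k₁)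
    (h₂ : IsRadialProfile m' r₂ k₂) : ∃ M, 0 ≤ M ∧ ∀ z y : LogHalfSpace n₁ × LogHalfSpace n₂,
      k₁ (coshGap z.1 y.1) * k₂ (coshGap z.2 y.2) ≤
        M * max (|r₁| + |r₂| + 1 - prodGap z y) 0 ^ 2 := by
  obtain ⟨M₁, hM₁, hk₁⟩ := h₁.exists_abs_le
  obtain ⟨M₂, hM₂, hk₂⟩ := h₂.exists_abs_le
  refine ⟨M₁ * M₂, by positivity, fun z y => ?_⟩
  obtain hlt | hle₁ := lt_or_ge r₁ (coshGap z.1 y.1)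
  · rw [h₁.eq_zero _ hlt, zero_mul]
    positivity
  obtain hlt | hle₂ := lt_or_ge r₂ (coshGap z.2 y.2)
  · rw [h₂.eq_zero _ hlt, mul_zero]
    positivity
  have hone : 1 ≤ max (|r₁| + |r₂| + 1 - prodGap z y) 0 := by
    rw [prodGap]
    exact le_max_of_le_left (by linarith [le_abs_self r₁, le_abs_self r₂])
  calc _ ≤ |k₁ (coshGap z.1 y.1)| * |k₂ (coshGap z.2 y.2)| := by
        rw [← abs_mul]
        exact le_abs_self _
    _ ≤ M₁ * M₂ * 1 := by
        rw [mul_one]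
        gcongr
        exacts [hk₁ _ (coshGap_nonneg _ _), hk₂ _ (coshGap_nonneg _ _)]
    _ ≤ _ := by
        gcongr
        exact one_le_pow₀ hone

theorem IsRadialProfile.exists_radialConvFst_radialConvSnd_le (h₁ : IsRadialProfile m r₁ k₁)
    (h₂ : IsRadialProfile m' r₂ k₂) (μ : ℝ) :
    ∃ C, 0 < C ∧ ∀ u : LogHalfSpace n₁ × LogHalfSpace n₂ → ℝ, ContDiff ℝ 2 u → (∀ y, 0 ≤ u y) →
      (∀ y, logLapFst u y + logLapSnd u y = -(μ * u y)) →
      ∀ z, radialConvFst k₁ (radialConvSnd k₂ u) z ≤ C * u z := by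
  obtain ⟨M, hM, hkernel⟩ := h₁.exists_mul_le_bump h₂ (n₁ := n₁) (n₂ := n₂)
  set τ := |r₁| + |r₂| + 1
  have hτ : 0 < τ := by positivity
  obtain ⟨D, hD⟩ := exists_bumpIntegral_one_le n₁ n₂ τ
  have hD₀ : 0 < D := (bumpIntegral_one_pos 0 hτ).trans_le (hD 0)
  refine ⟨M * (exp (bumpRate n₁ n₂ μ * τ) * D) + 1, by positivity, fun u hu hnonneg heq z => ?_⟩
  calc radialConvFst k₁ (radialConvSnd k₂ u) z
      ≤ ∫ y, M * (max (τ - prodGap z y) 0 ^ 2 * u y) ∂(hypVol n₁).prod (hypVol n₂) := by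
        rw [h₁.radialConvFst_radialConvSnd h₂ hu.continuous]
        refine integral_mono (h₁.integrable_prodKernel_mul h₂ hu.continuous z)
          ((integrable_bump_mul hu.continuous z τ 1).const_mul M) fun y => ?_
        exact (mul_le_mul_of_nonneg_right (hkernel z y) (hnonneg y)).trans_eq (mul_assoc _ _ _)
    _ ≤ M * (exp (bumpRate n₁ n₂ μ * τ) * D * u z) := by
        rw [integral_const_mul]
        refine mul_le_mul_of_nonneg_left ((bumpIntegral_le hu hnonneg heq z hτ).trans ?_) hM
        gcongr
        exacts [hnonneg z, hD z]
    _ ≤ _ := by linarith [hnonneg z]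

end Harnack

section PositiveProfiles

variable {n : ℕ} {m : WithTop ℕ∞} {r : ℝ} {k : ℝ → ℝ} {w : LogHalfSpace n → ℝ}

theorem IsRadialProfile.radialConv_pos (h : IsRadialProfile m r k) (hk : ∀ t, 0 ≤ t → 0 ≤ k t)
    (hk₀ : 0 < k 0) (hw : Continuous w) (hpos : ∀ p, 0 < w p) (p : LogHalfSpace n) :
    0 < radialConv n k w p :=
  integral_pos_of_integrable_nonneg_nonzero (x := p)
    ((h.continuous.comp (by fun_prop)).mul hw) (h.integrable hw p)
    (fun q => mul_nonneg (hk _ (coshGap_nonneg p q)) (hpos q).le)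
    (by rw [coshGap_self]; exact (mul_pos hk₀ (hpos p)).ne')

theorem tendsto_radialConv_div_radialMass (j : ℕ) (hw : Continuous w) (p : LogHalfSpace n) :
    Tendsto (fun ε => radialConv n (fun t => max (ε - t) 0 ^ (j + 1)) w p /
      radialMass n fun t => max (ε - t) 0 ^ (j + 1)) (𝓝[>] 0) (𝓝 (w p)) := by
  have hint : ∀ (ε : ℝ) {f : LogHalfSpace n → ℝ}, Continuous f →
      Integrable (fun q => max (ε - coshGap p q) 0 ^ (j + 1) * f q) (hypVol n) :=
    fun ε _ hf => (isRadialProfile_max_sub_pow j ε).integrable hf p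
  have hmass : ∀ ε : ℝ, ∫ q, max (ε - coshGap p q) 0 ^ (j + 1) ∂hypVol n =
      radialMass n fun t => max (ε - t) 0 ^ (j + 1) := fun ε => by
    simpa [radialConv] using radialConv_const (fun t => max (ε - t) 0 ^ (j + 1)) 1 p
  have := tendsto_integral_max_sub_pow_mul_div (j := j) (ν := hypVol n)
    (continuous_coshGap continuous_const continuous_id) (coshGap_self p)
    (fun _ => eventually_forall_mem_of_coshGap_le)
    (fun ε => by simpa using hint ε (continuous_const (y := 1))) (fun ε => hint ε hw)
    hw.continuousAt
  simpa only [radialConv, ← hmass, id_eq] using this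

/-- A nonnegative radial profile of class `C^4` supported in `t ≤ 1`. -/
noncomputable def bump (t : ℝ) : ℝ := max (1 - t) 0 ^ 5

/-- The profile of the operator `Δ + 40 (n + 1)²` composed with the radial convolution of profile
`bump`; the constant is large enough to make it nonnegative. -/
noncomputable def bumpLap (n : ℕ) (t : ℝ) : ℝ := radialLap n bump t + 40 * (n + 1) ^ 2 * bump t

theorem isRadialProfile_bump : IsRadialProfile 4 1 bump :=
  isRadialProfile_max_sub_pow 4 1

theorem isRadialProfile_bumpLap (n : ℕ) : IsRadialProfile 2 1 (bumpLap n) := by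
  have hlap : IsRadialProfile 2 1 (radialLap n bump) :=
    isRadialProfile_bump.radialLap (by norm_num) n
  have hbump := isRadialProfile_bump.contDiff.of_le (m := 2) (by norm_num)
  exact ⟨hlap.contDiff.add (contDiff_const.mul hbump), fun t ht => by
    simp only [bumpLap, hlap.eq_zero t ht, isRadialProfile_bump.eq_zero t ht, mul_zero, add_zero]⟩

theorem bump_nonneg (t : ℝ) : 0 ≤ bump t := by
  unfold bump
  positivity

theorem bumpLap_eq (n : ℕ) (t : ℝ) : bumpLap n t = max (1 - t) 0 ^ 3 *
    (20 * (t ^ 2 + 2 * t) - 5 * (n + 1) * (1 + t) * max (1 - t) 0 +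
      40 * (n + 1) ^ 2 * max (1 - t) 0 ^ 2) := by
  have hderiv : deriv bump = fun t => -(5 * max (1 - t) 0 ^ 4) :=
    funext fun t => ((hasDerivAt_max_sub_pow 3 1 t).congr_deriv (by norm_num)).deriv
  have hderiv₂ : deriv (deriv bump) t = 20 * max (1 - t) 0 ^ 3 := by
    rw [hderiv]
    refine HasDerivAt.deriv ?_
    exact ((hasDerivAt_max_sub_pow 2 1 t).const_mul 5).fun_neg.congr_deriv (by norm_num; ring)
  rw [bumpLap, radialLap, hderiv₂, hderiv, bump]
  ring

theorem bumpLap_nonneg (n : ℕ) {t : ℝ} (ht : 0 ≤ t) : 0 ≤ bumpLap n t := by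
  rw [bumpLap_eq]
  refine mul_nonneg (by positivity) ?_
  obtain hle | hlt := le_or_gt t 1
  · rw [max_eq_left (by linarith)]
    nlinarith [sq_nonneg (8 * (n + 1) * (1 - t) - 9), mul_nonneg (Nat.cast_nonneg (α := ℝ) n) ht,
      mul_nonneg (Nat.cast_nonneg (α := ℝ) n) (sub_nonneg.2 hle)]
  · rw [max_eq_right (by linarith)]
    nlinarith

theorem bumpLap_zero_pos (n : ℕ) : 0 < bumpLap n 0 := by
  rw [bumpLap_eq]
  norm_num
  nlinarith [Nat.cast_nonneg (α := ℝ) n]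

theorem logLap_eq_of_radialConv_eq (hw : Continuous w) {v : LogHalfSpace n → ℝ} {a b : ℝ}
    (ha : a ≠ 0) (hbump : ∀ p, radialConv n bump w p = a * v p)
    (hbumpLap : ∀ p, radialConv n (bumpLap n) w p = b * v p) (p : LogHalfSpace n) :
    logLap n v p = (b / a - 40 * (n + 1) ^ 2) * v p := by
  have hbump' := isRadialProfile_bump.of_le (m' := 2) (by norm_num)
  have := hbumpLap p
  rw [hbump'.radialConv_eq_logLap_radialConv_add (b := bumpLap n) (fun _ => rfl) hw, funext hbump,
    logLap_const_mul] at this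
  rw [sub_mul, div_mul_eq_mul_div, eq_sub_iff_add_eq, eq_div_iff ha, ← this]
  ring

end PositiveProfiles

/-! ### Minimal solutions are eigenfunctions of the averages in each factor -/

section Minimal

variable {n₁ n₂ : ℕ} {μ : ℝ} {u : LogHalfSpace n₁ × LogHalfSpace n₂ → ℝ} {r r₁ r₂ : ℝ}
  {k k₁ k₂ : ℝ → ℝ}

/-- The `μ`-harmonic functions of the product: `C²` solutions of `-(Δ₁ + Δ₂) u = μ u`. -/
structure ProdHarmonic (μ : ℝ) (u : LogHalfSpace n₁ × LogHalfSpace n₂ → ℝ) : Prop where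
  contDiff : ContDiff ℝ 2 u
  eq : ∀ z, logLapFst u z + logLapSnd u z = -(μ * u z)

/-- The minimal positive `μ`-harmonic functions of the product. That the constant lies in `[0, 1]`
is automatic. -/
structure MinimalProdHarmonic (μ : ℝ) (u : LogHalfSpace n₁ × LogHalfSpace n₂ → ℝ) : Prop
    extends ProdHarmonic μ u where
  pos : ∀ z, 0 < u z
  exists_eq_const_mul : ∀ v, ProdHarmonic μ v → (∀ z, 0 ≤ v z) → (∀ z, v z ≤ u z) →
    ∃ C, ∀ z, v z = C * u z

theorem ProdHarmonic.const_mul (h : ProdHarmonic μ u) (c : ℝ) :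
    ProdHarmonic μ fun z => c * u z :=
  ⟨contDiff_const.mul h.contDiff, fun z => by
    rw [logLapFst_const_mul, logLapSnd_const_mul, ← mul_add, h.eq]; ring⟩

theorem ProdHarmonic.swap (h : ProdHarmonic μ u) : ProdHarmonic μ fun z => u z.swap :=
  ⟨h.contDiff.comp (contDiff_snd.prodMk contDiff_fst), fun z =>
    (add_comm _ _).trans (h.eq z.swap)⟩

theorem MinimalProdHarmonic.swap (h : MinimalProdHarmonic μ u) :
    MinimalProdHarmonic μ fun z => u z.swap :=
  ⟨h.toProdHarmonic.swap, fun z => h.pos z.swap, fun _ hv hnonneg hle =>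
    (h.exists_eq_const_mul _ hv.swap (fun z => hnonneg z.swap) (fun z => hle z.swap)).imp
      fun _ hC z => hC z.swap⟩

theorem ProdHarmonic.radialConv (h : ProdHarmonic μ u) (h₁ : IsRadialProfile 2 r₁ k₁)
    (h₂ : IsRadialProfile 2 r₂ k₂) :
    ProdHarmonic μ (radialConvFst k₁ (radialConvSnd k₂ u)) := by
  have hu := h.contDiff.continuous
  have hlap₁ : IsRadialProfile 0 r₁ (radialLap n₁ k₁) := h₁.radialLap (by norm_num) n₁
  have hlap₂ : IsRadialProfile 0 r₂ (radialLap n₂ k₂) := h₂.radialLap (by norm_num) n₂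
  have hfst : ∀ z, logLapFst (radialConvFst k₁ (radialConvSnd k₂ u)) z =
      radialConvFst k₁ (radialConvSnd k₂ (logLapFst u)) z := fun z => by
    rw [h₁.logLapFst_radialConvFst (h₂.continuous_radialConvSnd hu),
      ← hlap₁.radialConvSnd_radialConvFst h₂ hu,
      funext (h₁.radialConvFst_radialLap h.contDiff),
      h₁.radialConvSnd_radialConvFst h₂ (continuous_logLapFst h.contDiff)]
  have hsnd : ∀ z, logLapSnd (radialConvFst k₁ (radialConvSnd k₂ u)) z =
      radialConvFst k₁ (radialConvSnd k₂ (logLapSnd u)) z := fun z => by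
    rw [← funext (h₁.radialConvSnd_radialConvFst h₂ hu),
      h₂.logLapSnd_radialConvSnd (h₁.continuous_radialConvFst hu),
      h₁.radialConvSnd_radialConvFst hlap₂ hu, funext (h₂.radialConvSnd_radialLap h.contDiff)]
  refine ⟨h₁.contDiff_radialConvFst_radialConvSnd h₂ hu, fun z => ?_⟩
  have hlapFst := continuous_logLapFst h.contDiff
  have hlapSnd := continuous_logLapSnd h.contDiff
  rw [hfst, hsnd, h₁.radialConvFst_radialConvSnd h₂ hlapFst,
    h₁.radialConvFst_radialConvSnd h₂ hlapSnd, h₁.radialConvFst_radialConvSnd h₂ hu,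
    ← integral_add (h₁.integrable_prodKernel_mul h₂ hlapFst z)
      (h₁.integrable_prodKernel_mul h₂ hlapSnd z), ← integral_const_mul, ← integral_neg]
  refine integral_congr_ae (.of_forall fun y => ?_)
  simp only [← mul_add, h.eq]
  ring

theorem logLapFst_eq_of_radialConvFst_eq {v w : LogHalfSpace n₁ × LogHalfSpace n₂ → ℝ} {a b : ℝ}
    (hw : Continuous w) (ha : a ≠ 0) (hbump : ∀ z, radialConvFst bump w z = a * v z)
    (hbumpLap : ∀ z, radialConvFst (bumpLap n₁) w z = b * v z)
    (z : LogHalfSpace n₁ × LogHalfSpace n₂) :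
    logLapFst v z = (b / a - 40 * (n₁ + 1) ^ 2) * v z :=
  logLap_eq_of_radialConv_eq (w := fun p => w (p, z.2)) (hw.comp (by fun_prop)) ha
    (fun p => hbump (p, z.2)) (fun p => hbumpLap (p, z.2)) z.1

theorem logLapSnd_eq_of_radialConvSnd_eq {v w : LogHalfSpace n₁ × LogHalfSpace n₂ → ℝ} {a b : ℝ}
    (hw : Continuous w) (ha : a ≠ 0) (hbump : ∀ z, radialConvSnd bump w z = a * v z)
    (hbumpLap : ∀ z, radialConvSnd (bumpLap n₂) w z = b * v z)
    (z : LogHalfSpace n₁ × LogHalfSpace n₂) :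
    logLapSnd v z = (b / a - 40 * (n₂ + 1) ^ 2) * v z :=
  logLap_eq_of_radialConv_eq (w := fun q => w (z.1, q)) (hw.comp (by fun_prop)) ha
    (fun q => hbump (z.1, q)) (fun q => hbumpLap (z.1, q)) z.2

namespace MinimalProdHarmonic

theorem exists_radialConvFst_radialConvSnd_eq (h : MinimalProdHarmonic μ u)
    (h₁ : IsRadialProfile 2 r₁ k₁) (h₂ : IsRadialProfile 2 r₂ k₂) (hk₁ : ∀ t, 0 ≤ t → 0 ≤ k₁ t)
    (hk₂ : ∀ t, 0 ≤ t → 0 ≤ k₂ t) :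
    ∃ c, ∀ z, radialConvFst k₁ (radialConvSnd k₂ u) z = c * u z := by
  obtain ⟨C, hC, hharnack⟩ := h₁.exists_radialConvFst_radialConvSnd_le h₂ μ (n₁ := n₁) (n₂ := n₂)
  have hnonneg : ∀ z, 0 ≤ radialConvFst k₁ (radialConvSnd k₂ u) z := fun z => by
    rw [h₁.radialConvFst_radialConvSnd h₂ h.contDiff.continuous]
    exact integral_nonneg fun y => mul_nonneg (mul_nonneg (hk₁ _ (coshGap_nonneg _ _))
      (hk₂ _ (coshGap_nonneg _ _))) (h.pos y).le
  obtain ⟨c, hc⟩ := h.exists_eq_const_mul _ ((h.toProdHarmonic.radialConv h₁ h₂).const_mul C⁻¹)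
    (fun z => mul_nonneg (inv_nonneg.2 hC.le) (hnonneg z))
    (fun z => (inv_mul_le_iff₀ hC).2 (hharnack u h.contDiff (fun y => (h.pos y).le) h.eq z))
  exact ⟨C * c, fun z => by rw [mul_assoc, ← hc, mul_inv_cancel_left₀ hC.ne']⟩

theorem exists_radialConvFst_eq (h : MinimalProdHarmonic μ u) (hk : IsRadialProfile 2 r k)
    (hnonneg : ∀ t, 0 ≤ t → 0 ≤ k t) : ∃ c, ∀ z, radialConvFst k u z = c * u z := by
  let peak : ℝ → ℝ → ℝ := fun ε t => max (ε - t) 0 ^ 3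
  have hpeak : ∀ ε, IsRadialProfile 2 ε (peak ε) := isRadialProfile_max_sub_pow 2
  choose c hc using fun ε => h.exists_radialConvFst_radialConvSnd_eq hk (hpeak ε) hnonneg
    (fun t _ => by positivity)
  have htendsto : ∀ z, Tendsto (fun ε => c ε / radialMass n₂ (peak ε)) (𝓝[>] 0)
      (𝓝 (radialConvFst k u z / u z)) := fun z => by
    have hcont := (hk.continuous_radialConvFst h.contDiff.continuous).comp
      (continuous_const (y := z.1).prodMk continuous_id)
    refine ((tendsto_radialConv_div_radialMass 2 hcont z.2).div_const (u z)).congr fun ε => ?_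
    have hconv : radialConv n₂ (peak ε) (fun q => radialConvFst k u (z.1, q)) z.2 = c ε * u z :=
      (hk.radialConvSnd_radialConvFst (hpeak ε) h.contDiff.continuous z).trans (hc ε z)
    refine (congrArg (· / radialMass n₂ (peak ε) / u z) hconv).trans ?_
    rw [mul_div_right_comm, mul_div_cancel_right₀ _ (h.pos z).ne']
  exact ⟨radialConvFst k u 0 / u 0, fun z => by
    rw [tendsto_nhds_unique (htendsto 0) (htendsto z), div_mul_cancel₀ _ (h.pos z).ne']⟩

theorem exists_radialConvSnd_eq (h : MinimalProdHarmonic μ u) (hk : IsRadialProfile 2 r k)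
    (hnonneg : ∀ t, 0 ≤ t → 0 ≤ k t) : ∃ c, ∀ z, radialConvSnd k u z = c * u z :=
  (h.swap.exists_radialConvFst_eq hk hnonneg).imp fun _ hc z => hc z.swap

theorem exists_pos_radialConvFst_eq (h : MinimalProdHarmonic μ u) (hk : IsRadialProfile 2 r k)
    (hnonneg : ∀ t, 0 ≤ t → 0 ≤ k t) (hpos : 0 < k 0) :
    ∃ c, 0 < c ∧ ∀ z, radialConvFst k u z = c * u z := by
  obtain ⟨c, hc⟩ := h.exists_radialConvFst_eq hk hnonneg
  refine ⟨c, pos_of_mul_pos_left ?_ (h.pos 0).le, hc⟩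
  rw [← hc]
  exact hk.radialConv_pos hnonneg hpos (h.contDiff.continuous.comp (by fun_prop))
    (fun p => h.pos (p, _)) _

theorem exists_pos_radialConvSnd_eq (h : MinimalProdHarmonic μ u) (hk : IsRadialProfile 2 r k)
    (hnonneg : ∀ t, 0 ≤ t → 0 ≤ k t) (hpos : 0 < k 0) :
    ∃ c, 0 < c ∧ ∀ z, radialConvSnd k u z = c * u z :=
  (h.swap.exists_pos_radialConvFst_eq hk hnonneg hpos).imp fun _ hc => ⟨hc.1, fun z => hc.2 z.swap⟩

theorem exists_logLapFst_eq (h : MinimalProdHarmonic μ u) :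
    ∃ μ₁, ∀ z, logLapFst u z = -(μ₁ * u z) := by
  obtain ⟨a, ha, hbump⟩ := h.exists_pos_radialConvFst_eq (isRadialProfile_bump.of_le (by norm_num))
    (fun t _ => bump_nonneg t) (by norm_num [bump])
  obtain ⟨b, hb⟩ := h.exists_radialConvFst_eq (isRadialProfile_bumpLap n₁)
    (fun t => bumpLap_nonneg n₁)
  refine ⟨40 * (n₁ + 1) ^ 2 - b / a, fun z => ?_⟩
  rw [← neg_mul, neg_sub]
  exact logLapFst_eq_of_radialConvFst_eq h.contDiff.continuous ha.ne' hbump hb z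

end MinimalProdHarmonic

end Minimal

/-! ### Coincidence points and compactness -/

section Coincidence

theorem exists_map_sub_map_eq_smul {V : Type*} [AddCommGroup V] [Module ℝ V] {A B : Module.End ℝ V}
    (hAB : Commute A B) {G : Set V} (hG : Convex ℝ G) (hne : G.Nonempty) (hA : MapsTo A G G)
    (hB : MapsTo B G G) (N : ℕ) :
    ∃ h ∈ G, ∃ f ∈ G, ∃ g ∈ G, A h - B h = ((N : ℝ) + 1)⁻¹ • (f - g) := by
  obtain ⟨x, hx⟩ := hne
  have hiter : ∀ {T : Module.End ℝ V}, MapsTo T G G → ∀ i : ℕ, MapsTo (T ^ i) G G :=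
    fun {T} hT i => by simpa only [Module.End.coe_pow] using hT.iterate i
  refine ⟨∑ i ∈ Finset.range (N + 1), ((N : ℝ) + 1)⁻¹ • (A ^ i * B ^ (N - i)) x,
    hG.sum_mem (fun _ _ => by positivity) ?_ fun i _ => hiter hA i (hiter hB _ hx),
    (A ^ (N + 1)) x, hiter hA _ hx, (B ^ (N + 1)) x, hiter hB _ hx, ?_⟩
  · rw [Finset.sum_const, Finset.card_range, nsmul_eq_mul, Nat.cast_succ]
    exact mul_inv_cancel₀ (Nat.cast_add_one_ne_zero N)
  · have := congrArg (fun T : Module.End ℝ V => T x) (hAB.mul_geom_sum₂ (N + 1))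
    rw [← Finset.smul_sum, map_smul, map_smul, ← smul_sub]
    simpa [LinearMap.sum_apply, map_sum] using congrArg _ this

theorem exists_map_eq_map_of_commute {E : Type*} [AddCommGroup E] [Module ℝ E] [TopologicalSpace E]
    [IsTopologicalAddGroup E] [ContinuousSMul ℝ E] [T2Space E] {A B : E →L[ℝ] E}
    (hAB : ∀ x, A (B x) = B (A x)) {G S : Set E} (hG : Convex ℝ G) (hne : G.Nonempty)
    (hA : MapsTo A G G) (hB : MapsTo B G G) (hS : IsCompact S) (hAS : MapsTo A G S) :
    ∃ w ∈ S, A w = B w := by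
  choose h hh f hf g hg heq using exists_map_sub_map_eq_smul
    (A := (A : Module.End ℝ E)) (B := (B : Module.End ℝ E)) (LinearMap.ext hAB) hG hne hA hB
  simp only [ContinuousLinearMap.coe_coe] at heq
  obtain ⟨w, hw, hcluster⟩ := hS.exists_mapClusterPt (f := atTop) (u := fun N => A (h N))
    (tendsto_principal.2 (.of_forall fun N => hAS (hh N)))
  have hdiff : ∀ N, (A - B) (A (h N)) = ((N : ℝ) + 1)⁻¹ • A (f N) - ((N : ℝ) + 1)⁻¹ • A (g N) :=
    fun N => by rw [sub_apply, ← hAB, ← map_sub, heq, map_smul, map_sub, smul_sub]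
  have hzero : Tendsto (fun N => (A - B) (A (h N))) atTop (𝓝 0) := by
    have hscale : Tendsto (fun N : ℕ => ((N : ℝ) + 1)⁻¹) atTop (𝓝 0) :=
      tendsto_inv_atTop_zero.comp (tendsto_atTop_add_const_right _ 1 tendsto_natCast_atTop_atTop)
    have hbdd := hS.isVonNBounded ℝ
    simpa only [hdiff, sub_zero, Pi.smul_apply'] using
      (hbdd.smul_tendsto_zero (.of_forall fun N => hAS (hf N)) hscale).sub
        (hbdd.smul_tendsto_zero (.of_forall fun N => hAS (hg N)) hscale)
  have hlimit : ClusterPt ((A - B) w) (𝓝 0) :=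
    ClusterPt.mono (hcluster.continuousAt_comp (A - B).continuous.continuousAt) hzero
  exact ⟨w, hw, sub_eq_zero.1 (eq_of_nhds_neBot hlimit.neBot)⟩

end Coincidence

section Equicontinuous

theorem isCompact_setOf_mem_Icc_and_abs_sub_le {X : Type*} [TopologicalSpace X] (a b : X → ℝ)
    {D : X × X → ℝ} (hD : Continuous D) (hD₀ : ∀ x, D (x, x) = 0) :
    IsCompact {f : C(X, ℝ) | (∀ x, f x ∈ Icc (a x) (b x)) ∧ ∀ x y, |f x - f y| ≤ D (x, y)} := by
  set S : Set C(X, ℝ) := {f | (∀ x, f x ∈ Icc (a x) (b x)) ∧ ∀ x y, |f x - f y| ≤ D (x, y)}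
  let T : Set (X → ℝ) := {f | (∀ x, f x ∈ Icc (a x) (b x)) ∧ ∀ x y, |f x - f y| ≤ D (x, y)}
  have hT : IsCompact T := by
    have hclosed : IsClosed {f : X → ℝ | ∀ x y, |f x - f y| ≤ D (x, y)} := by
      simp only [ofPred_forall]
      exact isClosed_iInter fun x => isClosed_iInter fun y =>
        isClosed_le (by fun_prop) continuous_const
    convert (isCompact_univ_pi fun x => isCompact_Icc (a := a x) (b := b x)).inter_right hclosed
    ext f
    simp only [T, mem_inter_iff, Set.mem_pi, mem_univ, true_imp_iff, mem_ofPred_eq]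
  have hequi : Equicontinuous fun f : T => (f : X → ℝ) := fun x =>
    Metric.equicontinuousAt_of_continuity_modulus (fun y => D (x, y))
      (hD₀ x ▸ (hD.comp (Continuous.prodMk_right x)).tendsto x) _
      (.of_forall fun y f => f.2.2 x y)
  refine ArzelaAscoli.isCompact_of_equicontinuous _ ?_ ?_
  · convert hT
    ext f
    refine ⟨fun ⟨_, hg, hgf⟩ => hgf ▸ hg, fun hf => ⟨⟨f, hequi.continuous ⟨f, hf⟩⟩, hf, rfl⟩⟩
  · exact hequi.comp fun f : S => (⟨f.1, f.2⟩ : T)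

end Equicontinuous

section KernelModulus

variable {E F : Type*} [TopologicalSpace E] [TopologicalSpace F] {κ : E × F → ℝ}

theorem LocallyCompactlySupported.abs_sub (hs : LocallyCompactlySupported κ) :
    LocallyCompactlySupported fun x : (E × E) × F => |κ (x.1.1, x.2) - κ (x.1.2, x.2)| := by
  intro S hS
  obtain ⟨T, hT, hT0⟩ := hs (Prod.fst '' S ∪ Prod.snd '' S)
    ((hS.image continuous_fst).union (hS.image continuous_snd))
  refine ⟨T, hT, fun z hz q hq => ?_⟩
  change |κ (z.1, q) - κ (z.2, q)| = 0
  rw [hT0 z.1 (.inl (mem_image_of_mem _ hz)) q hq, hT0 z.2 (.inr (mem_image_of_mem _ hz)) q hq,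
    sub_self, abs_zero]

variable [T2Space F] [MeasurableSpace F] [OpensMeasurableSpace F] {ν : Measure F} {f g : F → ℝ}

theorem abs_integral_kernel_sub_le (hκ : Continuous κ) (hs : LocallyCompactlySupported κ)
    (hf : LocallyIntegrable f ν) (hg : LocallyIntegrable g ν) (hfg : ∀ q, |f q| ≤ g q) (x y : E) :
    |∫ q, κ (x, q) * f q ∂ν - ∫ q, κ (y, q) * f q ∂ν| ≤ ∫ q, |κ (x, q) - κ (y, q)| * g q ∂ν := by
  have hx := integrable_kernel_mul hκ hs hf x
  have hy := integrable_kernel_mul hκ hs hf y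
  rw [← integral_sub hx hy]
  refine abs_integral_le_integral_abs.trans (integral_mono (hx.sub hy).abs
    (integrable_kernel_mul (by fun_prop) hs.abs_sub hg (x, y)) fun q => ?_)
  simp only [← sub_mul, abs_mul]
  exact mul_le_mul_of_nonneg_left (hfg q) (abs_nonneg _)

end KernelModulus

/-! ### Slices of minimal solutions are proportional -/

section Operators

variable {n₁ n₂ : ℕ} {m m' : WithTop ℕ∞} {r r' : ℝ} {k k' : ℝ → ℝ}

/-- `radialConvFst` as a continuous linear operator on the continuous functions with the topology
of locally uniform convergence. -/
noncomputable def radialConvFstCLM (h : IsRadialProfile m r k) :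
    C(LogHalfSpace n₁ × LogHalfSpace n₂, ℝ) →L[ℝ] C(LogHalfSpace n₁ × LogHalfSpace n₂, ℝ) where
  toFun w := ⟨radialConvFst k w, h.continuous_radialConvFst w.continuous⟩
  map_add' f g := ContinuousMap.ext fun z =>
    h.radialConv_add (f := fun p => f (p, z.2)) (g := fun p => g (p, z.2)) (by fun_prop)
      (by fun_prop) z.1
  map_smul' c f := ContinuousMap.ext fun z => radialConv_const_mul k c (fun p => f (p, z.2)) z.1
  cont := ContinuousMap.continuous_of_continuous_uncurry _ <| by
    have hf : Continuous fun y : (C(LogHalfSpace n₁ × LogHalfSpace n₂, ℝ) × LogHalfSpace n₂) ×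
        LogHalfSpace n₁ => y.1.1 (y.2, y.1.2) :=
      (continuous_fst.comp continuous_fst).eval
        (continuous_snd.prodMk (continuous_snd.comp continuous_fst))
    have := (h.continuous_radialConv_prod hf).comp ((continuous_fst.comp continuous_snd).prodMk
      (continuous_fst.prodMk (continuous_snd.comp continuous_snd)))
    exact this

theorem continuous_radialConvSnd_apply (h : IsRadialProfile m r k)
    (z : LogHalfSpace n₁ × LogHalfSpace n₂) :
    Continuous fun w : C(LogHalfSpace n₁ × LogHalfSpace n₂, ℝ) => radialConvSnd k w z := by
  have hf : Continuous fun y : C(LogHalfSpace n₁ × LogHalfSpace n₂, ℝ) × LogHalfSpace n₂ =>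
      y.1 (z.1, y.2) :=
    continuous_fst.eval (continuous_const.prodMk continuous_snd)
  have := (h.continuous_radialConv_prod hf).comp (continuous_const (y := z.2).prodMk continuous_id)
  exact this

end Operators

section SliceMinorants

variable {n₁ n₂ : ℕ} {μ : ℝ} {u : LogHalfSpace n₁ × LogHalfSpace n₂ → ℝ} {q₀ q₁ : LogHalfSpace n₂}
  {r r₁ r₂ : ℝ} {k k₁ k₂ : ℝ → ℝ}

/-- The continuous functions between `0` and `u` that share the eigenvalues of `u` for the averages
in the second factor and whose slices at `q₀` and `q₁` add up to the slice of `u` at `q₀`. For a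
minimal `u`, a `μ`-harmonic element is a multiple of `u`, so that the slices of `u` at `q₀` and `q₁`
are proportional. -/
def sliceMinorants (u : LogHalfSpace n₁ × LogHalfSpace n₂ → ℝ) (q₀ q₁ : LogHalfSpace n₂) :
    Set C(LogHalfSpace n₁ × LogHalfSpace n₂, ℝ) :=
  {h | (∀ z, h z ∈ Icc 0 (u z)) ∧ (∀ r k c, IsRadialProfile 2 r k →
    (∀ z, radialConvSnd k u z = c * u z) → ∀ z, radialConvSnd k h z = c * h z) ∧
    ∀ p, h (p, q₀) + h (p, q₁) = u (p, q₀)}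

theorem IsRadialProfile.radialConvSnd_smul_add_smul {m : WithTop ℕ∞} (hk : IsRadialProfile m r k)
    (f g : C(LogHalfSpace n₁ × LogHalfSpace n₂, ℝ)) (a b : ℝ)
    (z : LogHalfSpace n₁ × LogHalfSpace n₂) :
    radialConvSnd k ⇑(a • f + b • g) z = a * radialConvSnd k f z + b * radialConvSnd k g z := by
  have := hk.radialConv_add (f := fun q => a * f (z.1, q)) (g := fun q => b * g (z.1, q))
    (by fun_prop) (by fun_prop) z.2
  rwa [radialConv_const_mul, radialConv_const_mul] at this

theorem convex_sliceMinorants : Convex ℝ (sliceMinorants u q₀ q₁) := by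
  rintro f ⟨hf, hf', hf''⟩ g ⟨hg, hg', hg''⟩ a b ha hb hab
  refine ⟨fun z => convex_Icc 0 (u z) (hf z) (hg z) ha hb hab, fun r k c hk hc z => ?_, fun p => ?_⟩
  · rw [hk.radialConvSnd_smul_add_smul, hf' r k c hk hc, hg' r k c hk hc]
    simp only [ContinuousMap.add_apply, ContinuousMap.smul_apply, smul_eq_mul]
    ring
  · simp only [ContinuousMap.add_apply, ContinuousMap.smul_apply, smul_eq_mul]
    linear_combination a * hf'' p + b * hg'' p + hab * u (p, q₀)

theorem isClosed_sliceMinorants : IsClosed (sliceMinorants u q₀ q₁) := by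
  simp only [sliceMinorants, ofPred_and, ofPred_forall]
  refine .inter ?_ (.inter ?_ ?_)
  · exact isClosed_iInter fun z => isClosed_Icc.preimage (continuous_eval_const z)
  · exact isClosed_iInter fun r => isClosed_iInter fun k => isClosed_iInter fun c =>
      isClosed_iInter fun hk => isClosed_iInter fun _ => isClosed_iInter fun z =>
        isClosed_eq (continuous_radialConvSnd_apply hk z) ((continuous_eval_const z).const_mul c)
  · exact isClosed_iInter fun p => isClosed_eq
      ((continuous_eval_const _).add (continuous_eval_const _)) continuous_const

theorem nonempty_sliceMinorants (hu : Continuous u) (hpos : ∀ z, 0 < u z) :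
    (sliceMinorants u q₀ q₁).Nonempty := by
  have hsum : ∀ p, 0 < u (p, q₀) + u (p, q₁) := fun p => add_pos (hpos _) (hpos _)
  have hle : ∀ p, u (p, q₀) / (u (p, q₀) + u (p, q₁)) ≤ 1 := fun p =>
    (div_le_one (hsum p)).2 (le_add_of_nonneg_right (hpos _).le)
  refine ⟨⟨fun z => u (z.1, q₀) / (u (z.1, q₀) + u (z.1, q₁)) * u z, ?_⟩, fun z => ⟨?_, ?_⟩,
    fun r k c _ hc z => ?_, fun p => ?_⟩
  · have := fun z : LogHalfSpace n₁ × LogHalfSpace n₂ => (hsum z.1).ne'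
    fun_prop (disch := assumption)
  · exact mul_nonneg (div_pos (hpos _) (hsum _)).le (hpos z).le
  · exact mul_le_of_le_one_left (hpos z).le (hle z.1)
  · refine (radialConv_const_mul k (u (z.1, q₀) / (u (z.1, q₀) + u (z.1, q₁)))
      (fun q => u (z.1, q)) z.2).trans ?_
    exact (congrArg _ (hc z)).trans (mul_left_comm _ _ _)
  · exact (mul_add _ _ _).symm.trans (div_mul_cancel₀ _ (hsum p).ne')

theorem mapsTo_radialConvFstCLM_sliceMinorants (hu : Continuous u) (hk : IsRadialProfile 2 r k)
    (hnonneg : ∀ t, 0 ≤ t → 0 ≤ k t) {a : ℝ} (ha : 0 < a)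
    (hconv : ∀ z, radialConvFst k u z = a * u z) :
    MapsTo (a⁻¹ • radialConvFstCLM hk) (sliceMinorants u q₀ q₁) (sliceMinorants u q₀ q₁) := by
  rintro h ⟨hIcc, heig, hslice⟩
  have hu_eq : ∀ z, u z = a⁻¹ * radialConvFst k u z := fun z => by
    rw [hconv, inv_mul_cancel_left₀ ha.ne']
  have hk_nonneg : ∀ p q : LogHalfSpace n₁, 0 ≤ k (coshGap p q) := fun p q =>
    hnonneg _ (coshGap_nonneg p q)
  refine ⟨fun z => ⟨?_, ?_⟩, fun r' k' c hk' hc z => ?_, fun p => ?_⟩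
  · exact mul_nonneg (inv_pos.2 ha).le (integral_nonneg fun p =>
      mul_nonneg (hk_nonneg _ _) (hIcc _).1)
  · rw [hu_eq z]
    refine mul_le_mul_of_nonneg_left (integral_mono (hk.integrable (by fun_prop) _)
      (hk.integrable (by fun_prop) _) fun p => ?_) (inv_pos.2 ha).le
    exact mul_le_mul_of_nonneg_left (hIcc _).2 (hk_nonneg _ _)
  · refine (radialConv_const_mul k' a⁻¹ (fun q => radialConvFst k h (z.1, q)) z.2).trans ?_
    have hcomm := hk.radialConvSnd_radialConvFst hk' h.continuous z
    rw [funext (heig r' k' c hk' hc)] at hcomm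
    have := hcomm.trans (radialConv_const_mul k c (fun p => h (p, z.2)) z.1)
    exact (congrArg _ this).trans (mul_left_comm _ _ _)
  · have := hk.radialConv_add (f := fun p => h (p, q₀)) (g := fun p => h (p, q₁)) (by fun_prop)
      (by fun_prop) p
    simp only [hslice] at this
    exact ((mul_add _ _ _).symm.trans (congrArg _ this.symm)).trans (hu_eq (p, q₀)).symm

end SliceMinorants

section Coincidence

variable {n₁ n₂ : ℕ} {u : LogHalfSpace n₁ × LogHalfSpace n₂ → ℝ} {q₀ q₁ : LogHalfSpace n₂}
  {r₁ r₂ a c : ℝ} {k₁ k₂ : ℝ → ℝ}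

theorem IsRadialProfile.radialConvFst_eq_integral (h₁ : IsRadialProfile 2 r₁ k₁)
    (h₂ : IsRadialProfile 2 r₂ k₂) (hc : c ≠ 0) (hu : Continuous u)
    (hconv : ∀ z, radialConvSnd k₂ u z = c * u z) (z : LogHalfSpace n₁ × LogHalfSpace n₂) :
    radialConvFst k₁ u z = c⁻¹ *
      ∫ y, k₁ (coshGap z.1 y.1) * k₂ (coshGap z.2 y.2) * u y ∂(hypVol n₁).prod (hypVol n₂) := by
  rw [← h₁.radialConvFst_radialConvSnd h₂ hu, funext hconv, eq_inv_mul_iff_mul_eq₀ hc]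
  exact (radialConv_const_mul k₁ c (fun p => u (p, z.2)) z.1).symm

theorem exists_isCompact_mapsTo_radialConvFstCLM (hu : Continuous u) (h₁ : IsRadialProfile 2 r₁ k₁)
    (h₂ : IsRadialProfile 2 r₂ k₂) (hc : c ≠ 0) (hconv : ∀ z, radialConvSnd k₂ u z = c * u z)
    (hmaps : MapsTo (a⁻¹ • radialConvFstCLM h₁) (sliceMinorants u q₀ q₁)
      (sliceMinorants u q₀ q₁)) :
    ∃ S ⊆ sliceMinorants u q₀ q₁, IsCompact S ∧
      MapsTo (a⁻¹ • radialConvFstCLM h₁) (sliceMinorants u q₀ q₁) S := by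
  let κ : (LogHalfSpace n₁ × LogHalfSpace n₂) × (LogHalfSpace n₁ × LogHalfSpace n₂) → ℝ :=
    fun x => k₁ (coshGap x.1.1 x.2.1) * k₂ (coshGap x.1.2 x.2.2)
  have hκ : Continuous κ := (h₁.contDiff_prodKernel h₂).continuous
  have hs : LocallyCompactlySupported κ :=
    h₁.locallyCompactlySupported.prod_mul h₂.locallyCompactlySupported
  let D : (LogHalfSpace n₁ × LogHalfSpace n₂) × (LogHalfSpace n₁ × LogHalfSpace n₂) → ℝ :=
    fun z => |a⁻¹ * c⁻¹| * ∫ y, |κ (z.1, y) - κ (z.2, y)| * u y ∂(hypVol n₁).prod (hypVol n₂)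
  have hD : Continuous D := by
    have hmodulus : Continuous fun x : ((LogHalfSpace n₁ × LogHalfSpace n₂) ×
        (LogHalfSpace n₁ × LogHalfSpace n₂)) × (LogHalfSpace n₁ × LogHalfSpace n₂) =>
        |κ (x.1.1, x.2) - κ (x.1.2, x.2)| := by fun_prop
    exact ((continuous_integral_kernel hmodulus hs.abs_sub (f := fun y : Unit × _ => u y.2)
      (hu.comp continuous_snd)).comp (Continuous.prodMk_left ())).const_mul _
  have hD₀ : ∀ z, D (z, z) = 0 := fun z => by simp [D]
  refine ⟨_, inter_subset_right, (isCompact_setOf_mem_Icc_and_abs_sub_le 0 u hD hD₀).inter_right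
    isClosed_sliceMinorants, fun h hh => ⟨⟨(hmaps hh).1, fun z z' => ?_⟩, hmaps hh⟩⟩
  have hval : ∀ z, (a⁻¹ • radialConvFstCLM h₁) h z =
      a⁻¹ * c⁻¹ * ∫ y, κ (z, y) * h y ∂(hypVol n₁).prod (hypVol n₂) := fun z => by
    rw [mul_assoc]
    exact congrArg _
      (h₁.radialConvFst_eq_integral h₂ hc h.continuous (hh.2.1 r₂ k₂ c h₂ hconv) z)
  rw [hval, hval, ← mul_sub, abs_mul]
  refine mul_le_mul_of_nonneg_left (abs_integral_kernel_sub_le hκ hs h.continuous.locallyIntegrable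
    hu.locallyIntegrable (fun y => ?_) z z') (abs_nonneg _)
  rw [abs_of_nonneg (hh.1 y).1]
  exact (hh.1 y).2

end Coincidence

namespace MinimalProdHarmonic

variable {n₁ n₂ : ℕ} {μ : ℝ} {u : LogHalfSpace n₁ × LogHalfSpace n₂ → ℝ}

theorem exists_mem_sliceMinorants_radialConvFst_eq (h : MinimalProdHarmonic μ u)
    (q₀ q₁ : LogHalfSpace n₂) {a b : ℝ} (ha : 0 < a) (hb : 0 < b)
    (hbump : ∀ z, radialConvFst bump u z = a * u z)
    (hbumpLap : ∀ z, radialConvFst (bumpLap n₁) u z = b * u z) :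
    ∃ w : C(LogHalfSpace n₁ × LogHalfSpace n₂, ℝ), ∃ V ∈ sliceMinorants u q₀ q₁,
      (∀ z, radialConvFst bump w z = a * V z) ∧ ∀ z, radialConvFst (bumpLap n₁) w z = b * V z := by
  have hu := h.contDiff.continuous
  have hprofile := isRadialProfile_bump.of_le (m' := 2) (by norm_num)
  have hprofileLap := isRadialProfile_bumpLap n₁
  obtain ⟨c, hc, hsnd⟩ := h.exists_pos_radialConvSnd_eq hprofile (fun t _ => bump_nonneg t)
    (by norm_num [bump])
  have hmaps := mapsTo_radialConvFstCLM_sliceMinorants (q₀ := q₀) (q₁ := q₁) hu hprofile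
    (fun t _ => bump_nonneg t) ha hbump
  have hmapsLap := mapsTo_radialConvFstCLM_sliceMinorants (q₀ := q₀) (q₁ := q₁) hu hprofileLap
    (fun t => bumpLap_nonneg n₁) hb hbumpLap
  obtain ⟨S, hSG, hS, hmapsS⟩ := exists_isCompact_mapsTo_radialConvFstCLM hu hprofile hprofile
    hc.ne' hsnd hmaps
  have hcomm : ∀ f, (a⁻¹ • radialConvFstCLM hprofile) ((b⁻¹ • radialConvFstCLM hprofileLap) f) =
      (b⁻¹ • radialConvFstCLM hprofileLap)
        ((a⁻¹ • radialConvFstCLM hprofile) (f : C(LogHalfSpace n₁ × LogHalfSpace n₂, ℝ))) := by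
    intro f
    have : radialConvFstCLM hprofile (radialConvFstCLM hprofileLap f) =
        radialConvFstCLM hprofileLap (radialConvFstCLM hprofile f) :=
      ContinuousMap.ext fun z => hprofile.radialConv_comm (b := bumpLap n₁) (fun _ => rfl)
        (w := fun p => f (p, z.2)) (by fun_prop) z.1
    simp only [smul_apply, map_smul, this, smul_comm a⁻¹]
  obtain ⟨w, hw, hAB⟩ := exists_map_eq_map_of_commute hcomm convex_sliceMinorants
    (nonempty_sliceMinorants hu h.pos) hmaps hmapsLap hS hmapsS
  refine ⟨w, _, hmaps (hSG hw), fun z => (mul_inv_cancel_left₀ ha.ne' _).symm, fun z => ?_⟩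
  rw [hAB]
  exact (mul_inv_cancel_left₀ hb.ne' _).symm

theorem exists_prodHarmonic_mem_sliceMinorants (h : MinimalProdHarmonic μ u)
    (q₀ q₁ : LogHalfSpace n₂) : ∃ V ∈ sliceMinorants u q₀ q₁, ProdHarmonic μ V := by
  have hu := h.contDiff.continuous
  have hprofile := isRadialProfile_bump.of_le (m' := 2) (by norm_num)
  obtain ⟨a, ha, hbump⟩ := h.exists_pos_radialConvFst_eq hprofile (fun t _ => bump_nonneg t)
    (by norm_num [bump])
  obtain ⟨b, hb, hbumpLap⟩ := h.exists_pos_radialConvFst_eq (isRadialProfile_bumpLap n₁)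
    (fun t => bumpLap_nonneg n₁) (bumpLap_zero_pos n₁)
  obtain ⟨c, hc, hbump'⟩ := h.exists_pos_radialConvSnd_eq hprofile (fun t _ => bump_nonneg t)
    (by norm_num [bump])
  obtain ⟨d, hbumpLap'⟩ := h.exists_radialConvSnd_eq (isRadialProfile_bumpLap n₂)
    (fun t => bumpLap_nonneg n₂)
  obtain ⟨w, V, hV, hVbump, hVbumpLap⟩ :=
    h.exists_mem_sliceMinorants_radialConvFst_eq q₀ q₁ ha hb hbump hbumpLap
  have hVbump' := hV.2.1 _ _ c hprofile hbump'
  have hVbumpLap' := hV.2.1 _ _ d (isRadialProfile_bumpLap n₂) hbumpLap'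
  have hμ := h.eq 0
  rw [logLapFst_eq_of_radialConvFst_eq hu ha.ne' hbump hbumpLap,
    logLapSnd_eq_of_radialConvSnd_eq hu hc.ne' hbump' hbumpLap', ← add_mul, ← neg_mul] at hμ
  refine ⟨V, hV, ?_, fun z => ?_⟩
  · have hV_eq : ⇑V = fun z => (a * c)⁻¹ * radialConvFst bump (radialConvSnd bump w) z :=
      funext fun z => by
        rw [eq_inv_mul_iff_mul_eq₀ (mul_pos ha hc).ne',
          ← hprofile.radialConvSnd_radialConvFst hprofile w.continuous, funext hVbump, mul_assoc,
          ← hVbump']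
        exact (radialConv_const_mul bump a (fun q => V (z.1, q)) z.2).symm
    rw [hV_eq]
    exact contDiff_const.mul (hprofile.contDiff_radialConvFst_radialConvSnd hprofile w.continuous)
  · rw [logLapFst_eq_of_radialConvFst_eq w.continuous ha.ne' hVbump hVbumpLap,
      logLapSnd_eq_of_radialConvSnd_eq V.continuous hc.ne' hVbump' hVbumpLap', ← add_mul,
      mul_right_cancel₀ (h.pos 0).ne' hμ, neg_mul]

theorem exists_slice_eq_const_mul (h : MinimalProdHarmonic μ u) (q₀ q₁ : LogHalfSpace n₂) :
    ∃ c, ∀ p, u (p, q₁) = c * u (p, q₀) := by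
  obtain ⟨V, ⟨hIcc, -, hslice⟩, hV⟩ := h.exists_prodHarmonic_mem_sliceMinorants q₀ q₁
  obtain ⟨C, hC⟩ := h.exists_eq_const_mul V hV (fun z => (hIcc z).1) fun z => (hIcc z).2
  have hsum : ∀ p, C * (u (p, q₀) + u (p, q₁)) = u (p, q₀) := fun p => by
    rw [mul_add, ← hC, ← hC, hslice]
  have hC₀ : C ≠ 0 := left_ne_zero_of_mul ((hsum 0).trans_ne (h.pos _).ne')
  refine ⟨C⁻¹ * (1 - C), fun p => ?_⟩
  rw [mul_assoc, eq_inv_mul_iff_mul_eq₀ hC₀]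
  linarith [hsum p]

end MinimalProdHarmonic

/-! ### The bottom of the spectrum -/

section EigenvalueBound

theorem iteratedDeriv_two_nonneg_of_isLocalMin {f : ℝ → ℝ} {a : ℝ} (hf : ContinuousAt f a)
    (h : IsLocalMin f a) : 0 ≤ iteratedDeriv 2 f a := by
  rw [iteratedDeriv_succ, iteratedDeriv_one]
  by_contra! hneg
  have hmax := isLocalMax_of_deriv_deriv_neg hneg h.deriv_eq_zero hf
  have hconst : f =ᶠ[𝓝 a] fun _ => f a := by
    filter_upwards [h, hmax] with t hle hge using le_antisymm hge hle
  simp [hconst.deriv.deriv_eq] at hneg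

theorem lineDeriv₂_nonneg_of_isLocalMin {E : Type*} [NormedAddCommGroup E] [NormedSpace ℝ E]
    {f : E → ℝ} {p : E} (hf : Continuous f) (h : IsLocalMin f p) (v : E) :
    0 ≤ lineDeriv₂ f p v := by
  rw [lineDeriv₂_eq_iteratedDeriv]
  refine iteratedDeriv_two_nonneg_of_isLocalMin (by fun_prop) ?_
  have hline : Tendsto (fun t : ℝ => p + t • v) (𝓝 0) (𝓝 p) :=
    Continuous.tendsto' (by fun_prop) _ _ (by simp)
  simpa [IsLocalMin, IsMinFilter] using hline.eventually h

theorem lineDeriv_sub {E : Type*} [NormedAddCommGroup E] [NormedSpace ℝ E] {m : WithTop ℕ∞}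
    {f g : E → ℝ} (hf : ContDiff ℝ m f) (hg : ContDiff ℝ m g) (hm : m ≠ 0) (p v : E) :
    lineDeriv ℝ (fun q => f q - g q) p v = lineDeriv ℝ f p v - lineDeriv ℝ g p v :=
  HasLineDerivAt.lineDeriv
    ((hasLineDerivAt_of_contDiff hf hm p v).fun_sub (hasLineDerivAt_of_contDiff hg hm p v))

variable {n : ℕ} {μ ν ε R : ℝ} {f g w φ : LogHalfSpace n → ℝ} {p : LogHalfSpace n}

theorem logLap_sub (hf : ContDiff ℝ 2 f) (hg : ContDiff ℝ 2 g) (p : LogHalfSpace n) :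
    logLap n (fun q => f q - g q) p = logLap n f p - logLap n g p := by
  have first := fun v q => lineDeriv_sub hf hg two_ne_zero q v
  have second : ∀ v, lineDeriv₂ (fun q => f q - g q) p v = lineDeriv₂ f p v - lineDeriv₂ g p v :=
    fun v => by
      have hf' : ContDiff ℝ 1 (lineDeriv ℝ f · v) := contDiff_lineDeriv hf one_add_one_eq_two.le v
      have hg' : ContDiff ℝ 1 (lineDeriv ℝ g · v) := contDiff_lineDeriv hg one_add_one_eq_two.le v
      rw [lineDeriv₂, funext (first v), lineDeriv_sub hf' hg' one_ne_zero, lineDeriv₂, lineDeriv₂]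
  simp only [logLap, first, second, Finset.sum_sub_distrib]
  ring

theorem logLap_nonneg_of_isLocalMin (hf : Continuous f) (h : IsLocalMin f p) :
    0 ≤ logLap n f p := by
  have hcrit : lineDeriv ℝ f p dirS = 0 := congrFun h.lineDeriv_eq_zero dirS
  rw [logLap, hcrit, mul_zero, sub_zero]
  have hsecond := lineDeriv₂_nonneg_of_isLocalMin hf h
  exact add_nonneg (mul_nonneg (exp_pos _).le (Finset.sum_nonneg fun i _ => hsecond _)) (hsecond _)

/-- Barta's comparison argument: look at a maximum of `φ / w` on `S`. -/
theorem eigenvalue_le_of_subsolution (hw : ContDiff ℝ 2 w) (hpos : ∀ p, 0 < w p)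
    (heq : ∀ p, logLap n w p = -(μ * w p)) {S : Set (LogHalfSpace n)} (hS : IsCompact S)
    (hφ : ContDiff ℝ 2 φ) (hex : ∃ p ∈ S, 0 < φ p) (hint : ∀ p ∈ S, 0 < φ p → p ∈ interior S)
    (hsub : ∀ p ∈ S, 0 < φ p → -(ν * φ p) ≤ logLap n φ p) : μ ≤ ν := by
  obtain ⟨q, hqS, hq⟩ := hex
  obtain ⟨p, hpS, hmax⟩ := hS.exists_isMaxOn ⟨q, hqS⟩
    (hφ.continuous.div hw.continuous fun p => (hpos p).ne').continuousOn
  set M := φ p / w p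
  have hφp : φ p = M * w p := (div_mul_cancel₀ _ (hpos p).ne').symm
  have hφp_pos : 0 < φ p := hφp ▸ mul_pos ((div_pos hq (hpos q)).trans_le (hmax hqS)) (hpos p)
  have hmin : IsLocalMin (fun q => M * w q - φ q) p := by
    filter_upwards [mem_interior_iff_mem_nhds.1 (hint p hpS hφp_pos)] with q hq
    rw [← hφp, sub_self, sub_nonneg, ← div_le_iff₀ (hpos q)]
    exact hmax hq
  have hMw : ContDiff ℝ 2 fun q => M * w q := contDiff_const.mul hw
  have hlap := logLap_nonneg_of_isLocalMin (hMw.sub hφ).continuous hmin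
  rw [logLap_sub hMw hφ, logLap_const_mul, heq] at hlap
  have hle : μ * φ p ≤ ν * φ p := by
    have := hsub p hpS hφp_pos
    rw [hφp] at this ⊢
    linarith
  exact le_of_mul_le_mul_right hle hφp_pos

theorem logLap_separated (f : ℝ → ℝ) (g : EuclideanSpace ℝ (Fin n) → ℝ) (p : LogHalfSpace n) :
    logLap n (fun p => f p.2 * g p.1) p =
      exp (2 * p.2) * f p.2 * ∑ i, lineDeriv₂ g p.1 (EuclideanSpace.single i 1) +
        (deriv (deriv f) p.2 - n * deriv f p.2) * g p.1 := by
  have hX : ∀ i, lineDeriv₂ (fun p : LogHalfSpace n => f p.2 * g p.1) p (dirX i) =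
      f p.2 * lineDeriv₂ g p.1 (EuclideanSpace.single i 1) := fun i => by
    simp [lineDeriv₂_eq_iteratedDeriv, dirX, iteratedDeriv_const_mul_field]
  have hS : ∀ f : ℝ → ℝ, ∀ p, lineDeriv ℝ (fun p : LogHalfSpace n => f p.2 * g p.1) p dirS =
      deriv f p.2 * g p.1 := fun f p => by
    simp [lineDeriv, dirS, deriv_comp_const_add]
  have hSS : lineDeriv₂ (fun p : LogHalfSpace n => f p.2 * g p.1) p dirS =
      deriv (deriv f) p.2 * g p.1 := by
    rw [lineDeriv₂, funext (hS f), hS]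
  simp only [logLap, hX, hS, hSS, ← Finset.mul_sum]
  ring

/-- The radial factor `(R² - ‖x‖²)²` of the barrier. -/
noncomputable def ballBarrier (R : ℝ) (x : EuclideanSpace ℝ (Fin n)) : ℝ := (R ^ 2 - ‖x‖ ^ 2) ^ 2

theorem sum_lineDeriv₂_ballBarrier (R : ℝ) (x : EuclideanSpace ℝ (Fin n)) :
    ∑ i, lineDeriv₂ (ballBarrier R) x (EuclideanSpace.single i 1) =
      8 * ‖x‖ ^ 2 - 4 * n * (R ^ 2 - ‖x‖ ^ 2) := by
  have hk : ∀ t, HasDerivAt (fun t => (R ^ 2 - t) ^ 2) (2 * t - 2 * R ^ 2) t := fun t =>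
    (((hasDerivAt_id t).const_sub _).fun_pow 2).congr_deriv (by simp; ring)
  have hk' : deriv (fun t => 2 * t - 2 * R ^ 2) = fun _ => 2 := by
    funext t
    simp
  have hsq : ∀ i x, HasLineDerivAt ℝ (fun x : EuclideanSpace ℝ (Fin n) => ‖x‖ ^ 2) (2 * x i) x
      (EuclideanSpace.single i 1) := fun i x => by
    have := ((hasStrictFDerivAt_norm_sq x).hasFDerivAt.hasLineDerivAt (EuclideanSpace.single i 1))
    simpa [EuclideanSpace.inner_single_right] using this
  have hcoord : ∀ i x, HasLineDerivAt ℝ (fun x : EuclideanSpace ℝ (Fin n) => 2 * x i) 2 x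
      (EuclideanSpace.single i 1) := fun i x =>
    ((((hasDerivAt_id (0 : ℝ)).const_add (x i)).const_mul 2).congr_deriv
      (by simp)).congr_of_eventuallyEq (.of_forall fun t => by simp)
  have hterm : ∀ i, lineDeriv₂ (ballBarrier R) x (EuclideanSpace.single i 1) =
      8 * x i ^ 2 - 4 * (R ^ 2 - ‖x‖ ^ 2) := fun i => by
    refine (lineDeriv₂_comp (k := fun t => (R ^ 2 - t) ^ 2) (by fun_prop) (hsq i)
      (hcoord i x)).trans ?_
    rw [deriv_eq hk, hk']
    ring
  simp only [hterm, Finset.sum_sub_distrib, ← Finset.mul_sum, EuclideanSpace.real_norm_sq_eq,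
    Finset.sum_const, Finset.card_univ, Fintype.card_fin, nsmul_eq_mul]
  ring

/-- The solution `exp (n s / 2) cos (ε s)` of `f'' - n f' = -(n² / 4 + ε²) f`. -/
noncomputable def expCos (n : ℕ) (ε s : ℝ) : ℝ := exp (n / 2 * s) * cos (ε * s)

theorem deriv_deriv_expCos_sub (n : ℕ) (ε s : ℝ) :
    deriv (deriv (expCos n ε)) s - n * deriv (expCos n ε) s =
      -((n ^ 2 / 4 + ε ^ 2) * expCos n ε s) := by
  have hexp : ∀ s, HasDerivAt (fun s => exp (n / 2 * s)) (n / 2 * exp (n / 2 * s)) s := fun s =>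
    ((hasDerivAt_id s).const_mul ((n : ℝ) / 2)).exp.congr_deriv (by simp; ring)
  have hcos : ∀ s, HasDerivAt (fun s => cos (ε * s)) (-(ε * sin (ε * s))) s := fun s =>
    ((hasDerivAt_id s).const_mul ε).cos.congr_deriv (by simp; ring)
  have hsin : ∀ s, HasDerivAt (fun s => sin (ε * s)) (ε * cos (ε * s)) s := fun s =>
    ((hasDerivAt_id s).const_mul ε).sin.congr_deriv (by simp; ring)
  have first : deriv (expCos n ε) = fun s => n / 2 * exp (n / 2 * s) * cos (ε * s) +
      exp (n / 2 * s) * -(ε * sin (ε * s)) :=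
    deriv_eq fun s => (hexp s).fun_mul (hcos s)
  have second := (((hexp s).const_mul ((n : ℝ) / 2)).fun_mul (hcos s)).fun_add
    ((hexp s).fun_mul ((hsin s).const_mul ε).fun_neg)
  rw [first, second.deriv, expCos]
  ring

theorem mem_Ioo_of_expCos_pos (hε : 0 < ε) {s : ℝ}
    (hs : s ∈ Icc (-(π / (2 * ε))) (π / (2 * ε))) (hpos : 0 < expCos n ε s) :
    s ∈ Ioo (-(π / (2 * ε))) (π / (2 * ε)) := by
  have hend : ε * (π / (2 * ε)) = π / 2 := by field_simp
  have hne : ∀ t, cos (ε * t) = 0 → t ≠ s := by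
    rintro t ht rfl
    simp [expCos, ht] at hpos
  exact ⟨hs.1.lt_of_ne (hne _ (by simp [hend])), hs.2.lt_of_ne (hne _ (by simp [hend])).symm⟩

theorem neg_mul_ballBarrier_le_sum_lineDeriv₂ (hR : 0 < R) (x : EuclideanSpace ℝ (Fin n)) :
    -((8 + 4 * n) ^ 2 / (32 * R ^ 2) * ballBarrier R x) ≤
      ∑ i, lineDeriv₂ (ballBarrier R) x (EuclideanSpace.single i 1) := by
  have hsq : 8 * ‖x‖ ^ 2 - 4 * n * (R ^ 2 - ‖x‖ ^ 2) +
      (8 + 4 * n) ^ 2 / (32 * R ^ 2) * ballBarrier R x =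
        8 * (R - (8 + 4 * n) * (R ^ 2 - ‖x‖ ^ 2) / (16 * R)) ^ 2 := by
    rw [ballBarrier]
    field_simp
    ring
  rw [sum_lineDeriv₂_ballBarrier, neg_le_iff_add_nonneg, hsq]
  positivity

theorem logLap_barrier_ge (hR : 0 < R) {p : LogHalfSpace n} {c : ℝ} (hc : exp (2 * p.2) ≤ c)
    (hpos : 0 ≤ expCos n ε p.2) :
    -((n ^ 2 / 4 + ε ^ 2 + c * ((8 + 4 * n) ^ 2 / (32 * R ^ 2))) *
        (expCos n ε p.2 * ballBarrier R p.1)) ≤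
      logLap n (fun p => expCos n ε p.2 * ballBarrier R p.1) p := by
  have hbar : 0 ≤ (8 + 4 * (n : ℝ)) ^ 2 / (32 * R ^ 2) * ballBarrier R p.1 :=
    mul_nonneg (by positivity) (sq_nonneg _)
  have hfactor : 0 ≤ exp (2 * p.2) * expCos n ε p.2 := mul_nonneg (exp_pos _).le hpos
  rw [logLap_separated, deriv_deriv_expCos_sub]
  calc _ = -(c * expCos n ε p.2 * ((8 + 4 * n) ^ 2 / (32 * R ^ 2) * ballBarrier R p.1)) +
        -((n ^ 2 / 4 + ε ^ 2) * expCos n ε p.2) * ballBarrier R p.1 := by ring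
    _ ≤ exp (2 * p.2) * expCos n ε p.2 *
          -((8 + 4 * n) ^ 2 / (32 * R ^ 2) * ballBarrier R p.1) +
        -((n ^ 2 / 4 + ε ^ 2) * expCos n ε p.2) * ballBarrier R p.1 := by
      rw [mul_neg]
      gcongr
    _ ≤ _ := add_le_add_left
      (mul_le_mul_of_nonneg_left (neg_mul_ballBarrier_le_sum_lineDeriv₂ hR p.1) hfactor) _

theorem eigenvalue_le_of_barrier (hw : ContDiff ℝ 2 w) (hpos : ∀ p, 0 < w p)
    (heq : ∀ p, logLap n w p = -(μ * w p)) (hε : 0 < ε) (hR : 0 < R) :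
    μ ≤ n ^ 2 / 4 + ε ^ 2 + exp (π / ε) * ((8 + 4 * n) ^ 2 / (32 * R ^ 2)) := by
  set φ : LogHalfSpace n → ℝ := fun p => expCos n ε p.2 * ballBarrier R p.1
  set b := π / (2 * ε)
  have hb : 0 < b := by positivity
  set S : Set (LogHalfSpace n) := Metric.closedBall 0 R ×ˢ Icc (-b) b
  have hφ : ContDiff ℝ 2 φ := by
    have : ContDiff ℝ 2 fun p : LogHalfSpace n => ‖p.1‖ ^ 2 := contDiff_fst.norm_sq ℝ
    unfold φ expCos ballBarrier
    fun_prop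
  have hexpCos : ∀ p, 0 < φ p → 0 < expCos n ε p.2 := fun p hp =>
    pos_of_mul_pos_left hp (sq_nonneg _)
  refine eigenvalue_le_of_subsolution hw hpos heq
    ((isCompact_closedBall _ _).prod isCompact_Icc : IsCompact S) hφ ⟨0, ?_, ?_⟩ ?_ ?_
  · simp [hR.le, hb.le]
  · simpa [φ, expCos, ballBarrier] using pow_pos (pow_pos hR 2) 2
  · rintro p ⟨hx, hs⟩ hp
    rw [interior_prod_eq, interior_Icc, interior_closedBall _ hR.ne']
    refine ⟨Metric.mem_ball.2 (hx.lt_of_ne fun h => hp.ne' ?_),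
      mem_Ioo_of_expCos_pos hε hs (hexpCos p hp)⟩
    rw [dist_zero_right] at h
    simp [φ, ballBarrier, h]
  · rintro p ⟨-, hs⟩ hp
    have hb_two : π / ε = 2 * b := by
      simp only [b]
      field_simp
    refine logLap_barrier_ge hR (exp_le_exp.2 ?_) (hexpCos p hp).le
    linarith [hs.2]

theorem eigenvalue_le_of_pos (hw : ContDiff ℝ 2 w) (hpos : ∀ p, 0 < w p)
    (heq : ∀ p, logLap n w p = -(μ * w p)) : μ ≤ n ^ 2 / 4 := by
  have hε : ∀ ε > 0, μ ≤ (n : ℝ) ^ 2 / 4 + ε ^ 2 := fun ε hε => by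
    have hlim : Tendsto (fun R : ℝ => (n : ℝ) ^ 2 / 4 + ε ^ 2 +
        exp (π / ε) * ((8 + 4 * n) ^ 2 / (32 * R ^ 2))) atTop
        (𝓝 (n ^ 2 / 4 + ε ^ 2 + exp (π / ε) * 0)) :=
      (((tendsto_pow_atTop two_ne_zero).const_mul_atTop (by norm_num)).const_div_atTop
        _).const_mul _ |>.const_add _
    rw [mul_zero, add_zero] at hlim
    exact ge_of_tendsto hlim ((eventually_gt_atTop 0).mono fun R hR =>
      eigenvalue_le_of_barrier hw hpos heq hε hR)
  refine le_of_forall_pos_le_add fun δ hδ => ?_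
  simpa [sq_sqrt hδ.le] using hε (√δ) (sqrt_pos.2 hδ)

end EigenvalueBound

/-! ### Splitting in logarithmic coordinates -/

section Splitting

variable {n n₁ n₂ : ℕ} {μ μ₁ μ₂ : ℝ}

/-- The `μ`-harmonic functions of a single factor: `C²` solutions of `-Δ w = μ w`. -/
structure LogHarmonic (μ : ℝ) (w : LogHalfSpace n → ℝ) : Prop where
  contDiff : ContDiff ℝ 2 w
  eq : ∀ p, logLap n w p = -(μ * w p)

/-- The minimal positive `μ`-harmonic functions of a single factor. -/
structure MinimalLogHarmonic (μ : ℝ) (w : LogHalfSpace n → ℝ) : Prop extends LogHarmonic μ w where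
  pos : ∀ p, 0 < w p
  exists_eq_const_mul : ∀ v, LogHarmonic μ v → (∀ p, 0 ≤ v p) → (∀ p, v p ≤ w p) →
    ∃ C, ∀ p, v p = C * w p

theorem LogHarmonic.const_mul {w : LogHalfSpace n → ℝ} (h : LogHarmonic μ w) (c : ℝ) :
    LogHarmonic μ fun p => c * w p :=
  ⟨contDiff_const.mul h.contDiff, fun p => by rw [logLap_const_mul, h.eq]; ring⟩

theorem MinimalLogHarmonic.const_mul {w : LogHalfSpace n → ℝ} (h : MinimalLogHarmonic μ w) {c : ℝ}
    (hc : 0 < c) : MinimalLogHarmonic μ fun p => c * w p := by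
  refine ⟨h.toLogHarmonic.const_mul c, fun p => mul_pos hc (h.pos p), fun v hv hnonneg hle => ?_⟩
  obtain ⟨C, hC⟩ := h.exists_eq_const_mul _ (hv.const_mul c⁻¹)
    (fun p => mul_nonneg (inv_nonneg.2 hc.le) (hnonneg p))
    (fun p => (inv_mul_le_iff₀ hc).2 (hle p))
  exact ⟨C, fun p => by rw [mul_left_comm, ← hC, mul_inv_cancel_left₀ hc.ne']⟩

theorem LogHarmonic.mul {w₁ : LogHalfSpace n₁ → ℝ} {w₂ : LogHalfSpace n₂ → ℝ}
    (h₁ : LogHarmonic μ₁ w₁) (h₂ : LogHarmonic μ₂ w₂) :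
    ProdHarmonic (μ₁ + μ₂) fun z => w₁ z.1 * w₂ z.2 := by
  refine ⟨(h₁.contDiff.comp contDiff_fst).mul (h₂.contDiff.comp contDiff_snd), fun z => ?_⟩
  have hfst : logLapFst (fun z => w₁ z.1 * w₂ z.2) z = -(μ₁ * (w₁ z.1 * w₂ z.2)) := by
    simp only [logLapFst, mul_comm _ (w₂ z.2), logLap_const_mul, h₁.eq]
    ring
  have hsnd : logLapSnd (fun z => w₁ z.1 * w₂ z.2) z = -(μ₂ * (w₁ z.1 * w₂ z.2)) := by
    simp only [logLapSnd, logLap_const_mul, h₂.eq]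
    ring
  rw [hfst, hsnd]
  ring

namespace MinimalProdHarmonic

variable {u : LogHalfSpace n₁ × LogHalfSpace n₂ → ℝ}

theorem mul_eq_mul (h : MinimalProdHarmonic μ u) (p p₀ : LogHalfSpace n₁)
    (q q₀ : LogHalfSpace n₂) : u (p, q) * u (p₀, q₀) = u (p, q₀) * u (p₀, q) := by
  obtain ⟨c, hc⟩ := h.exists_slice_eq_const_mul q₀ q
  rw [hc, hc]
  ring

theorem minimalLogHarmonic_slice (h : MinimalProdHarmonic μ u)
    (hμ₁ : ∀ z, logLapFst u z = -(μ₁ * u z)) (q₀ : LogHalfSpace n₂) :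
    MinimalLogHarmonic μ₁ fun p => u (p, q₀) := by
  refine ⟨⟨h.contDiff.comp (contDiff_id.prodMk contDiff_const), fun p => hμ₁ (p, q₀)⟩,
    fun p => h.pos _, fun v hv hnonneg hle => ?_⟩
  have hslice : LogHarmonic (μ - μ₁) fun q => u (0, q) :=
    ⟨h.contDiff.comp (contDiff_const.prodMk contDiff_id), fun q => by
      have := (h.eq (0, q)).symm
      rw [hμ₁] at this
      exact (sub_eq_of_eq_add' this).symm.trans (by ring)⟩
  have hprod := hv.mul (hslice.const_mul (u (0, q₀))⁻¹)
  rw [add_sub_cancel] at hprod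
  have hpos := h.pos (0, q₀)
  obtain ⟨C, hC⟩ := h.exists_eq_const_mul _ hprod
    (fun z => mul_nonneg (hnonneg z.1) (mul_nonneg (inv_nonneg.2 hpos.le) (h.pos _).le))
    (fun z => by
      rw [mul_left_comm, inv_mul_le_iff₀ hpos, mul_comm (u _), h.mul_eq_mul z.1 0 z.2 q₀]
      exact mul_le_mul_of_nonneg_right (hle z.1) (h.pos _).le)
  exact ⟨C, fun p => by rw [← hC, inv_mul_cancel₀ hpos.ne', mul_one]⟩

theorem exists_eq_mul (h : MinimalProdHarmonic μ u) :
    ∃ (μ₁ μ₂ : ℝ) (u₁ : LogHalfSpace n₁ → ℝ) (u₂ : LogHalfSpace n₂ → ℝ), μ₁ + μ₂ = μ ∧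
      MinimalLogHarmonic μ₁ u₁ ∧ MinimalLogHarmonic μ₂ u₂ ∧ ∀ z, u z = u₁ z.1 * u₂ z.2 := by
  obtain ⟨μ₁, hμ₁⟩ := h.exists_logLapFst_eq
  have hμ₂ : ∀ z, logLapFst (fun z => u z.swap) z = -((μ - μ₁) * u z.swap) := fun z => by
    have heq : logLapFst u z.swap + logLapFst (fun z => u z.swap) z = -(μ * u z.swap) := h.eq z.swap
    rw [hμ₁] at heq
    linarith
  have hpos := h.pos (0, 0)
  refine ⟨μ₁, μ - μ₁, _, _, add_sub_cancel _ _, h.minimalLogHarmonic_slice hμ₁ 0,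
    (h.swap.minimalLogHarmonic_slice hμ₂ 0).const_mul (inv_pos.2 hpos), fun z => ?_⟩
  rw [mul_left_comm, eq_inv_mul_iff_mul_eq₀ hpos.ne', mul_comm]
  exact h.mul_eq_mul z.1 0 z.2 0

end MinimalProdHarmonic

theorem MinimalLogHarmonic.eigenvalue_le {w : LogHalfSpace n → ℝ} (h : MinimalLogHarmonic μ w) :
    μ ≤ n ^ 2 / 4 :=
  eigenvalue_le_of_pos h.contDiff h.pos h.eq

end Splitting

/-! ### Half-space coordinates -/

section HalfSpace

variable {n n₁ n₂ : ℕ} {μ : ℝ}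

theorem lapX_eq_sum_lineDeriv₂ (w : EuclideanSpace ℝ (Fin n) → ℝ → ℝ) (p : LogHalfSpace n) :
    lapX w p.1 (exp p.2) = ∑ i, lineDeriv₂ (fun p => w p.1 (exp p.2)) p (dirX i) := by
  simp [lapX, lineDeriv₂_eq_iteratedDeriv, dirX]

theorem deriv_eq_deriv_comp_exp {f : ℝ → ℝ} (hf : Differentiable ℝ fun s => f (exp s)) {y : ℝ}
    (hy : 0 < y) : deriv f y = deriv (fun s => f (exp s)) (log y) * y⁻¹ := by
  have hlog := (hf (log y)).hasDerivAt.comp y (hasDerivAt_log hy.ne')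
  refine (hlog.congr_of_eventuallyEq ?_).deriv
  filter_upwards [lt_mem_nhds hy] with t ht
  simp [exp_log ht]

theorem iteratedDeriv_two_eq_comp_exp {f : ℝ → ℝ} (hf : ContDiff ℝ 2 fun s => f (exp s)) (s : ℝ) :
    iteratedDeriv 2 f (exp s) =
      (deriv (deriv fun s => f (exp s)) s - deriv (fun s => f (exp s)) s) * (exp s ^ 2)⁻¹ := by
  have hf' : Differentiable ℝ (deriv fun s => f (exp s)) :=
    (hf.deriv' (n := 1)).differentiable one_ne_zero
  have hsecond := ((hf' (log (exp s))).hasDerivAt.comp (exp s)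
    (hasDerivAt_log (exp_ne_zero s))).fun_mul (hasDerivAt_inv (exp_ne_zero s))
  have hfirst : deriv f =ᶠ[𝓝 (exp s)] fun y => deriv (fun s => f (exp s)) (log y) * y⁻¹ := by
    filter_upwards [lt_mem_nhds (exp_pos s)] with y hy
    exact deriv_eq_deriv_comp_exp (hf.differentiable two_ne_zero) hy
  rw [iteratedDeriv_succ, iteratedDeriv_one, hfirst.deriv_eq]
  refine hsecond.deriv.trans ?_
  simp only [Function.comp_apply, log_exp]
  ring

theorem hypLap_eq_logLap {w : EuclideanSpace ℝ (Fin n) → ℝ → ℝ}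
    (hw : ContDiff ℝ 2 fun p : LogHalfSpace n => w p.1 (exp p.2)) (p : LogHalfSpace n) :
    hypLap n w p.1 (exp p.2) = logLap n (fun p => w p.1 (exp p.2)) p := by
  have hslice : ContDiff ℝ 2 fun s => w p.1 (exp s) :=
    hw.comp (contDiff_const.prodMk contDiff_id)
  have hS : ∀ q : LogHalfSpace n, lineDeriv ℝ (fun p : LogHalfSpace n => w p.1 (exp p.2)) q dirS =
      deriv (fun s => w q.1 (exp s)) q.2 := fun q => by
    simpa [lineDeriv, dirS] using deriv_comp_const_add (fun s => w q.1 (exp s)) q.2 0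
  have hSS : lineDeriv₂ (fun p : LogHalfSpace n => w p.1 (exp p.2)) p dirS =
      deriv (deriv fun s => w p.1 (exp s)) p.2 := by
    rw [lineDeriv₂, funext hS]
    simpa [lineDeriv, dirS] using deriv_comp_const_add (deriv fun s => w p.1 (exp s)) p.2 0
  rw [hypLap, logLap, lapX_eq_sum_lineDeriv₂, iteratedDeriv_two_eq_comp_exp hslice,
    deriv_eq_deriv_comp_exp (hslice.differentiable two_ne_zero) (exp_pos _), log_exp, hS, hSS,
    two_mul, exp_add]
  have := exp_ne_zero p.2
  field_simp
  ring

theorem contDiffOn_prodMk_log : ContDiffOn ℝ 2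
    (fun p : EuclideanSpace ℝ (Fin n) × ℝ => ((p.1, log p.2) : LogHalfSpace n)) {p | 0 < p.2} :=
  contDiff_fst.contDiffOn.prodMk (contDiff_snd.contDiffOn.log fun _ hp => ne_of_gt hp)

theorem MinimalLogHarmonic.minimalHarmonic {w : LogHalfSpace n → ℝ} (h : MinimalLogHarmonic μ w) :
    MinimalHarmonic n μ fun x y => w (x, log y) := by
  refine ⟨fun _ _ _ => h.pos _, h.contDiff.comp_contDiffOn contDiffOn_prodMk_log,
    fun x y hy => ?_, fun v hv hveq hle => ?_⟩
  · have := hypLap_eq_logLap (w := fun x y => w (x, log y)) (by simpa using h.contDiff) (x, log y)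
    simp only [exp_log hy, log_exp] at this
    rw [this, h.eq, neg_neg]
  have hv' : ContDiff ℝ 2 fun p : LogHalfSpace n => v p.1 (exp p.2) :=
    hv.comp_contDiff (f := fun p : LogHalfSpace n => (p.1, exp p.2)) (by fun_prop)
      fun p => exp_pos p.2
  have hle' : ∀ p : LogHalfSpace n, 0 ≤ v p.1 (exp p.2) ∧ v p.1 (exp p.2) ≤ w p := fun p => by
    simpa only [log_exp] using hle p.1 (exp p.2) (exp_pos _)
  obtain ⟨C, hC⟩ := h.exists_eq_const_mul _
    ⟨hv', fun p => by rw [← hypLap_eq_logLap hv', ← hveq _ _ (exp_pos _), neg_neg]⟩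
    (fun p => (hle' p).1) fun p => (hle' p).2
  refine ⟨C, ?_, fun x y hy => by simpa only [exp_log hy] using hC (x, log y)⟩
  have hC₀ := hle' 0
  rw [hC] at hC₀
  exact ⟨nonneg_of_mul_nonneg_left hC₀.1 (h.pos 0), (mul_le_iff_le_one_left (h.pos 0)).1 hC₀.2⟩

/-- A function on the product of two half-spaces, in logarithmic coordinates. -/
noncomputable def toLogCoord (u : EuclideanSpace ℝ (Fin n₁) → ℝ → EuclideanSpace ℝ (Fin n₂) → ℝ → ℝ)
    (z : LogHalfSpace n₁ × LogHalfSpace n₂) : ℝ :=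
  u z.1.1 (exp z.1.2) z.2.1 (exp z.2.2)

/-- A function in logarithmic coordinates, as a function on the product of two half-spaces. -/
noncomputable def ofLogCoord (U : LogHalfSpace n₁ × LogHalfSpace n₂ → ℝ)
    (x₁ : EuclideanSpace ℝ (Fin n₁)) (y₁ : ℝ) (x₂ : EuclideanSpace ℝ (Fin n₂)) (y₂ : ℝ) : ℝ :=
  U ((x₁, log y₁), (x₂, log y₂))

@[simp] theorem toLogCoord_ofLogCoord (U : LogHalfSpace n₁ × LogHalfSpace n₂ → ℝ) :
    toLogCoord (ofLogCoord U) = U := by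
  funext z
  simp [toLogCoord, ofLogCoord]

variable {u : EuclideanSpace ℝ (Fin n₁) → ℝ → EuclideanSpace ℝ (Fin n₂) → ℝ → ℝ}

theorem toLogCoord_apply_log (x₁ : EuclideanSpace ℝ (Fin n₁)) {y₁ : ℝ} (hy₁ : 0 < y₁)
    (x₂ : EuclideanSpace ℝ (Fin n₂)) {y₂ : ℝ} (hy₂ : 0 < y₂) :
    toLogCoord u ((x₁, log y₁), (x₂, log y₂)) = u x₁ y₁ x₂ y₂ := by
  simp only [toLogCoord, exp_log hy₁, exp_log hy₂]

theorem contDiff_toLogCoord (hu : ContDiffOn ℝ 2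
      (fun p : (EuclideanSpace ℝ (Fin n₁) × ℝ) × (EuclideanSpace ℝ (Fin n₂) × ℝ) =>
        u p.1.1 p.1.2 p.2.1 p.2.2) {p | 0 < p.1.2 ∧ 0 < p.2.2}) :
    ContDiff ℝ 2 (toLogCoord u) :=
  hu.comp_contDiff (f := fun z : LogHalfSpace n₁ × LogHalfSpace n₂ =>
    ((z.1.1, exp z.1.2), (z.2.1, exp z.2.2))) (by fun_prop) fun z => ⟨exp_pos _, exp_pos _⟩

theorem contDiffOn_ofLogCoord {U : LogHalfSpace n₁ × LogHalfSpace n₂ → ℝ} (hU : ContDiff ℝ 2 U) :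
    ContDiffOn ℝ 2 (fun p : (EuclideanSpace ℝ (Fin n₁) × ℝ) × (EuclideanSpace ℝ (Fin n₂) × ℝ) =>
      ofLogCoord U p.1.1 p.1.2 p.2.1 p.2.2) {p | 0 < p.1.2 ∧ 0 < p.2.2} :=
  hU.comp_contDiffOn ((contDiffOn_prodMk_log.comp contDiffOn_fst fun _ hp => hp.1).prodMk
    (contDiffOn_prodMk_log.comp contDiffOn_snd fun _ hp => hp.2))

theorem hypLap1_add_hypLap2_eq (hu : ContDiff ℝ 2 (toLogCoord u))
    (z : LogHalfSpace n₁ × LogHalfSpace n₂) :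
    hypLap1 n₁ n₂ u z.1.1 (exp z.1.2) z.2.1 (exp z.2.2) +
        hypLap2 n₁ n₂ u z.1.1 (exp z.1.2) z.2.1 (exp z.2.2) =
      logLapFst (toLogCoord u) z + logLapSnd (toLogCoord u) z :=
  congrArg₂ (· + ·)
    (hypLap_eq_logLap (w := fun x y => u x y z.2.1 (exp z.2.2))
      (hu.comp (contDiff_id.prodMk contDiff_const)) z.1)
    (hypLap_eq_logLap (hu.comp (contDiff_const.prodMk contDiff_id)) z.2)

theorem prodHarmonic_toLogCoord_iff (hu : ContDiff ℝ 2 (toLogCoord u)) :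
    ProdHarmonic μ (toLogCoord u) ↔ ∀ x₁, ∀ y₁ : ℝ, 0 < y₁ → ∀ x₂, ∀ y₂ : ℝ, 0 < y₂ →
      -(hypLap1 n₁ n₂ u x₁ y₁ x₂ y₂ + hypLap2 n₁ n₂ u x₁ y₁ x₂ y₂) = μ * u x₁ y₁ x₂ y₂ := by
  constructor
  · intro h x₁ y₁ hy₁ x₂ y₂ hy₂
    have := hypLap1_add_hypLap2_eq hu ((x₁, log y₁), (x₂, log y₂))
    rw [h.eq, toLogCoord_apply_log x₁ hy₁ x₂ hy₂] at this
    simp only [exp_log hy₁, exp_log hy₂] at this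
    rw [this, neg_neg]
  · exact fun h => ⟨hu, fun z => by
      rw [← hypLap1_add_hypLap2_eq hu, ← neg_eq_iff_eq_neg]
      exact h _ _ (exp_pos _) _ _ (exp_pos _)⟩

end HalfSpace

/-- splitting theorem. A positive minimal C² solution of
`-(Δ₁+Δ₂)u = μ u` on `ℍ^{n₁+1} × ℍ^{n₂+1}` splits as a product `u₁(x₁,y₁)·u₂(x₂,y₂)`
of positive minimal solutions with `μ₁ + μ₂ = μ`, `μᵢ ≤ nᵢ²/4`. -/
theorem minimal_harmonic_splits
    (n₁ n₂ : ℕ) (hn₁ : 1 ≤ n₁) (hn₂ : 1 ≤ n₂) (μ : ℝ)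
    (u : EuclideanSpace ℝ (Fin n₁) → ℝ → EuclideanSpace ℝ (Fin n₂) → ℝ → ℝ)
    (hupos : ∀ x₁, ∀ y₁ : ℝ, 0 < y₁ → ∀ x₂, ∀ y₂ : ℝ, 0 < y₂ → 0 < u x₁ y₁ x₂ y₂)
    (huC2 : ContDiffOn ℝ 2
      (fun p : (EuclideanSpace ℝ (Fin n₁) × ℝ) × (EuclideanSpace ℝ (Fin n₂) × ℝ) =>
        u p.1.1 p.1.2 p.2.1 p.2.2)
      {p : (EuclideanSpace ℝ (Fin n₁) × ℝ) × (EuclideanSpace ℝ (Fin n₂) × ℝ) |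
        0 < p.1.2 ∧ 0 < p.2.2})
    (hueq : ∀ x₁, ∀ y₁ : ℝ, 0 < y₁ → ∀ x₂, ∀ y₂ : ℝ, 0 < y₂ →
      -(hypLap1 n₁ n₂ u x₁ y₁ x₂ y₂ + hypLap2 n₁ n₂ u x₁ y₁ x₂ y₂) = μ * u x₁ y₁ x₂ y₂)
    (humin : ∀ v : EuclideanSpace ℝ (Fin n₁) → ℝ → EuclideanSpace ℝ (Fin n₂) → ℝ → ℝ,
      ContDiffOn ℝ 2
        (fun p : (EuclideanSpace ℝ (Fin n₁) × ℝ) × (EuclideanSpace ℝ (Fin n₂) × ℝ) =>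
          v p.1.1 p.1.2 p.2.1 p.2.2)
        {p : (EuclideanSpace ℝ (Fin n₁) × ℝ) × (EuclideanSpace ℝ (Fin n₂) × ℝ) |
          0 < p.1.2 ∧ 0 < p.2.2} →
      (∀ x₁, ∀ y₁ : ℝ, 0 < y₁ → ∀ x₂, ∀ y₂ : ℝ, 0 < y₂ →
        -(hypLap1 n₁ n₂ v x₁ y₁ x₂ y₂ + hypLap2 n₁ n₂ v x₁ y₁ x₂ y₂) = μ * v x₁ y₁ x₂ y₂) →
      (∀ x₁, ∀ y₁ : ℝ, 0 < y₁ → ∀ x₂, ∀ y₂ : ℝ, 0 < y₂ →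
        0 ≤ v x₁ y₁ x₂ y₂ ∧ v x₁ y₁ x₂ y₂ ≤ u x₁ y₁ x₂ y₂) →
      ∃ C : ℝ, C ∈ Set.Icc (0:ℝ) 1 ∧
        ∀ x₁, ∀ y₁ : ℝ, 0 < y₁ → ∀ x₂, ∀ y₂ : ℝ, 0 < y₂ →
          v x₁ y₁ x₂ y₂ = C * u x₁ y₁ x₂ y₂) :
    ∃ (μ₁ μ₂ : ℝ) (u₁ : EuclideanSpace ℝ (Fin n₁) → ℝ → ℝ)
      (u₂ : EuclideanSpace ℝ (Fin n₂) → ℝ → ℝ),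
      μ₁ + μ₂ = μ ∧ μ₁ ≤ (n₁ : ℝ)^2/4 ∧ μ₂ ≤ (n₂ : ℝ)^2/4 ∧
      MinimalHarmonic n₁ μ₁ u₁ ∧ MinimalHarmonic n₂ μ₂ u₂ ∧
      ∀ x₁, ∀ y₁ : ℝ, 0 < y₁ → ∀ x₂, ∀ y₂ : ℝ, 0 < y₂ →
        u x₁ y₁ x₂ y₂ = u₁ x₁ y₁ * u₂ x₂ y₂ := by
  have hU : ContDiff ℝ 2 (toLogCoord u) := contDiff_toLogCoord huC2
  have hminimal : MinimalProdHarmonic μ (toLogCoord u) := by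
    refine ⟨(prodHarmonic_toLogCoord_iff hU).2 hueq,
      fun z => hupos _ _ (exp_pos _) _ _ (exp_pos _), fun V hV hnonneg hle => ?_⟩
    rw [← toLogCoord_ofLogCoord V] at hV
    obtain ⟨C, -, hC⟩ := humin (ofLogCoord V)
      (contDiffOn_ofLogCoord (toLogCoord_ofLogCoord V ▸ hV.contDiff))
      ((prodHarmonic_toLogCoord_iff hV.contDiff).1 hV) fun x₁ y₁ hy₁ x₂ y₂ hy₂ =>
        ⟨hnonneg _, (hle _).trans_eq (toLogCoord_apply_log x₁ hy₁ x₂ hy₂)⟩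
    refine ⟨C, fun z => ?_⟩
    rw [← toLogCoord_ofLogCoord V]
    exact hC _ _ (exp_pos _) _ _ (exp_pos _)
  obtain ⟨μ₁, μ₂, u₁, u₂, hμ, h₁, h₂, hsplit⟩ := hminimal.exists_eq_mul
  refine ⟨μ₁, μ₂, fun x y => u₁ (x, log y), fun x y => u₂ (x, log y), hμ, h₁.eigenvalue_le,
    h₂.eigenvalue_le, h₁.minimalHarmonic, h₂.minimalHarmonic, fun x₁ y₁ hy₁ x₂ y₂ hy₂ => ?_⟩
  exact (toLogCoord_apply_log x₁ hy₁ x₂ hy₂).symm.trans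
    (hsplit ((x₁, log y₁), (x₂, log y₂)))
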